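/- arXiv:1712.06371 — 5 statements merged into one kernel-verified Lean document; each statement's English description precedes it below -/
import Mathlib

section
/- Suppose Assumptions (K) and (A_p) hold, let ε₀ = R/(8M), and let n be a positive integer and ε > 0 with (n+1)ε ≤ ε₀. Then the map R^[n]_θ(u) = −(∂_uΦ^[n]_θ(u))^{-1} δ^[n]_θ(u) is well-defined for θ ∈ 𝕋 and u ∈ K_{R/2}, and there exists a constant C, independent of ε, such that for all integers ν ≥ 0 and ξ ≥ 0 with ν + ξ ≤ p one has sup_{θ∈𝕋, u∈K_{R/2}} ‖∂_θ^ν ∂_u^ξ R^[n]_θ(u)‖ ≤ C·ε^n; equivalently, the mixed derivatives ∂_t^ν ∂_u^ξ of the map (t,u) ↦ R^[n]_{t/ε}(u) are bounded on ℝ × K_{R/2} by C·ε^{n−ν}. -/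
open Set

/-- The set `K_ρ = {u + ũ : u ∈ closure K, ‖ũ‖ ≤ ρ}` inside the complexification `Xc` of `X`. -/
def Kset {X Xc : Type*} [NormedAddCommGroup X] [NormedSpace ℝ X]
    [NormedAddCommGroup Xc] [NormedSpace ℂ Xc]
    (ι : X →ₗᵢ[ℝ] Xc) (K : Set X) (ρ : ℝ) : Set Xc :=
  {z | ∃ u ∈ closure K, ∃ w : Xc, ‖w‖ ≤ ρ ∧ z = ι u + w}

/-- θ-average `⟨g⟩(u) = ∫₀¹ g_θ(u) dθ` of a 1-periodic map. -/
noncomputable def thAvg {Xc : Type*} [NormedAddCommGroup Xc] [NormedSpace ℂ Xc]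
    (g : ℝ → Xc → Xc) (u : Xc) : Xc :=
  ∫ θ in (0:ℝ)..1, g θ u

/-- Averaged vector field `F(u) = (∂_u⟨φ⟩(u))⁻¹ ⟨f∘φ⟩(u)`. -/
noncomputable def aveField {Xc : Type*} [NormedAddCommGroup Xc] [NormedSpace ℂ Xc]
    (f φ : ℝ → Xc → Xc) (u : Xc) : Xc :=
  (fderiv ℂ (thAvg φ) u).inverse (thAvg (fun θ v => f θ (φ θ v)) u)

/-- The stroboscopic averaging iteration. -/
noncomputable def PhiIter {Xc : Type*} [NormedAddCommGroup Xc] [NormedSpace ℂ Xc]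
    (f : ℝ → Xc → Xc) (ε : ℝ) : ℕ → ℝ → Xc → Xc
  | 0 => fun _ u => u
  | k+1 => fun θ u => u + ε • ∫ τ in (0:ℝ)..θ,
      (f τ (PhiIter f ε k τ u) -
        fderiv ℂ (PhiIter f ε k τ) u (aveField f (PhiIter f ε k) u))

/-- The defect `δ^[k]_θ(u)`. -/
noncomputable def defect {Xc : Type*} [NormedAddCommGroup Xc] [NormedSpace ℂ Xc]
    (f : ℝ → Xc → Xc) (ε : ℝ) (k : ℕ) (θ : ℝ) (u : Xc) : Xc :=
  (1/ε) • deriv (fun τ => PhiIter f ε k τ u) θ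
    + fderiv ℂ (PhiIter f ε k θ) u (aveField f (PhiIter f ε k) u)
    - f θ (PhiIter f ε k θ u)

/-- The map `R^[n]_θ(u) = −(∂_uΦ^[n]_θ(u))⁻¹ δ^[n]_θ(u)` of the pullback formulation. -/
noncomputable def Rmap {Xc : Type*} [NormedAddCommGroup Xc] [NormedSpace ℂ Xc]
    (f : ℝ → Xc → Xc) (ε : ℝ) (n : ℕ) (θ : ℝ) (u : Xc) : Xc :=
  -((fderiv ℂ (PhiIter f ε n θ) u).inverse (defect f ε n θ u))

namespace Strob

open Set Metric Filter Topology


universe u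
variable {U E F G : Type u} [NormedAddCommGroup U] [NormedSpace ℂ U]
  [NormedAddCommGroup E] [NormedSpace ℂ E]
  [NormedAddCommGroup F] [NormedSpace ℂ F]
  [NormedAddCommGroup G] [NormedSpace ℂ G]

/-- Cauchy estimate for the Fréchet derivative. -/
theorem cauchy_fderiv {g : U → E} {c : U} {r C : ℝ} (hr : 0 < r)
    (hd : DifferentiableOn ℂ g (ball c r)) (hb : ∀ z ∈ ball c r, ‖g z‖ ≤ C) :
    ‖fderiv ℂ g c‖ ≤ C / r := by
  have hgc : DifferentiableAt ℂ g c := hd.differentiableAt (ball_mem_nhds c hr)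
  set h : U → E := fun z => (1/2 : ℂ) • (g (c + z) - g (c - z)) with hh
  have m1 : ∀ z ∈ ball (0:U) r, c + z ∈ ball c r := by
    intro z hz; simpa using hz
  have m2 : ∀ z ∈ ball (0:U) r, c - z ∈ ball c r := by
    intro z hz; simpa using hz
  have hhd : DifferentiableOn ℂ h (ball 0 r) := by
    apply DifferentiableOn.const_smul
    apply DifferentiableOn.sub
    · exact hd.comp (by fun_prop) m1
    · exact hd.comp (by fun_prop) m2
  have hmaps : MapsTo h (ball 0 r) (closedBall (h 0) C) := by
    intro z hz
    have h0 : h 0 = 0 := by simp [hh]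
    rw [h0, mem_closedBall_zero_iff]
    simp only [hh]
    rw [norm_smul]
    have := norm_sub_le (g (c+z)) (g (c-z))
    have a1 := hb _ (m1 z hz)
    have a2 := hb _ (m2 z hz)
    have : ‖(1/2 : ℂ)‖ = 1/2 := by norm_num
    rw [this]; linarith
  have key := Complex.norm_fderiv_le_div_of_mapsTo_ball hhd hmaps hr
  have : fderiv ℂ h 0 = fderiv ℂ g c := by
    have e1 : HasFDerivAt (fun z => g (c + z)) (fderiv ℂ g c) 0 := by
      have : HasFDerivAt g (fderiv ℂ g c) (c + 0) := by simpa using hgc.hasFDerivAt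
      have h2 : HasFDerivAt (fun z : U => c + z) (ContinuousLinearMap.id ℂ U) 0 :=
        (hasFDerivAt_id (0:U)).const_add c
      have h3 := HasFDerivAt.comp (0:U) this h2
      rw [ContinuousLinearMap.comp_id] at h3
      exact h3
    have e2 : HasFDerivAt (fun z => g (c - z)) (-(fderiv ℂ g c)) 0 := by
      have h1 : HasFDerivAt g (fderiv ℂ g c) (c - 0) := by simpa using hgc.hasFDerivAt
      have h2 : HasFDerivAt (fun z : U => c - z) (-(ContinuousLinearMap.id ℂ U)) 0 :=
        (hasFDerivAt_id (0:U)).const_sub c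
      have h3 := HasFDerivAt.comp (0:U) h1 h2
      rw [ContinuousLinearMap.comp_neg, ContinuousLinearMap.comp_id] at h3
      exact h3
    have e3 := ((e1.sub e2).const_smul (1/2 : ℂ)).fderiv
    have e4 : fderiv ℂ h 0 = (1/2 : ℂ) • (fderiv ℂ g c - -(fderiv ℂ g c)) := e3
    rw [e4, sub_neg_eq_add, ← two_smul ℂ, smul_smul]
    norm_num
  rwa [this] at key

/-- Quadratic Taylor remainder estimate. -/
theorem quad_rem {g : U → E} {c z : U} {r C : ℝ} (hr : 0 < r)
    (hd : DifferentiableOn ℂ g (ball c r)) (hb : ∀ z ∈ ball c r, ‖g z‖ ≤ C)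
    (hz : z ∈ ball c r) :
    ‖g z - g c - fderiv ℂ g c (z - c)‖ ≤ 3 * C * (‖z - c‖ / r) ^ 2 := by
  have hgc : DifferentiableAt ℂ g c := hd.differentiableAt (ball_mem_nhds c hr)
  set h : U → E := fun z => g z - g c - fderiv ℂ g c (z - c) with hh
  have h0 : h c = 0 := by simp [hh]
  have hhd : DifferentiableOn ℂ h (ball c r) := by
    apply DifferentiableOn.sub
    · exact hd.sub_const _
    · fun_prop
  have hmaps : MapsTo h (ball c r) (closedBall (h c) (3 * C)) := by
    intro z hz
    rw [h0, mem_closedBall_zero_iff]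
    have h1 := hb z hz
    have h2 := hb c (mem_ball_self hr)
    have h3 : ‖fderiv ℂ g c (z - c)‖ ≤ C := by
      refine (ContinuousLinearMap.le_opNorm _ _).trans ?_
      have h4 := cauchy_fderiv hr hd hb
      have h5 : ‖z - c‖ ≤ r := by
        rw [mem_ball, dist_eq_norm] at hz; exact hz.le
      have hC : 0 ≤ C := (norm_nonneg _).trans h2
      calc _ ≤ C / r * r := by gcongr
        _ = C := by field_simp
    calc ‖h z‖ ≤ ‖g z - g c‖ + ‖fderiv ℂ g c (z - c)‖ := norm_sub_le _ _
      _ ≤ (‖g z‖ + ‖g c‖) + ‖fderiv ℂ g c (z - c)‖ := by gcongr; exact norm_sub_le _ _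
      _ ≤ _ := by linarith
  have := Complex.dist_le_mul_div_pow_of_mapsTo_ball_of_isLittleO (n := 1) hhd hmaps ?_ hz
  · rw [h0, dist_zero_right, dist_eq_norm] at this
    exact this
  · rw [h0]
    have h6 := hgc.hasFDerivAt.isLittleO
    simp only [sub_zero, pow_one]
    exact h6.norm_right

/-- A locally uniform limit of holomorphic maps between Banach spaces is holomorphic. -/
theorem uniform_limit_diff [CompleteSpace E] {f : ℕ → U → E} {g : U → E} {c : U} {r : ℝ}
    (hr : 0 < r)
    (hd : ∀ n, DifferentiableOn ℂ (f n) (ball c r))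
    (hlim : TendstoUniformlyOn f g atTop (ball c r)) : DifferentiableAt ℂ g c := by
  have hsub : ∀ x ∈ ball c (r/2), ball x (r/2) ⊆ ball c r := by
    intro x hx
    apply ball_subset_ball'
    rw [mem_ball] at hx; linarith
  have hss : ball c (r/2) ⊆ ball c r := ball_subset_ball (by linarith)
  have hC : UniformCauchySeqOn (fun n x => fderiv ℂ (f n) x) atTop (ball c (r/2)) := by
    rw [Metric.uniformCauchySeqOn_iff]
    intro e he
    obtain ⟨N, hN⟩ := Metric.uniformCauchySeqOn_iff.1 hlim.uniformCauchySeqOn (e * (r/2) / 2)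
      (by positivity)
    refine ⟨N, fun m hm n hn x hx => ?_⟩
    have hxr : ball x (r/2) ⊆ ball c r := hsub x hx
    have dm := (hd m).mono hxr
    have dn := (hd n).mono hxr
    have hx0 : ball x (r/2) ∈ 𝓝 x := ball_mem_nhds x (by linarith)
    have e1 : fderiv ℂ (f m) x - fderiv ℂ (f n) x = fderiv ℂ (f m - f n) x := by
      rw [fderiv_sub (dm.differentiableAt hx0) (dn.differentiableAt hx0)]
    rw [dist_eq_norm, e1]
    have := cauchy_fderiv (C := e * (r/2) / 2) (by linarith : 0 < r/2) (dm.sub dn) (fun z hz => by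
      have := hN m hm n hn z (hxr hz)
      rw [dist_eq_norm] at this
      exact this.le)
    refine this.trans_lt ?_
    rw [div_lt_iff₀ (by linarith)]
    nlinarith [mul_pos he hr]
  have hpt : ∀ x ∈ ball c (r/2), ∃ y, Tendsto (fun n => fderiv ℂ (f n) x) atTop (𝓝 y) := by
    intro x hx
    exact cauchySeq_tendsto_of_complete (hC.cauchySeq hx)
  choose! g' hg' using hpt
  have hunif : TendstoUniformlyOn (fun n x => fderiv ℂ (f n) x) g' atTop (ball c (r/2)) :=
    hC.tendstoUniformlyOn_of_tendsto hg'
  have := hasFDerivAt_of_tendstoUniformlyOn isOpen_ball hunif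
    (fun n x hx => ((hd n).differentiableAt (isOpen_ball.mem_nhds (hss hx))).hasFDerivAt)
    (fun x hx => hlim.tendsto_at (hss hx)) (mem_ball_self (by linarith : 0 < r/2))
  exact this.differentiableAt

theorem diffAt_fderiv [CompleteSpace E] {g : U → E} {O : Set U} (hO : IsOpen O)
    (hg : DifferentiableOn ℂ g O) : DifferentiableOn ℂ (fderiv ℂ g) O := by
  intro c hc
  apply DifferentiableAt.differentiableWithinAt
  -- local boundedness
  have hgc : ContinuousAt g c := (hg.differentiableAt (hO.mem_nhds hc)).continuousAt
  obtain ⟨r, hr, hrO, hrb⟩ : ∃ r > 0, ball c (4*r) ⊆ O ∧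
      ∀ z ∈ ball c (4*r), ‖g z‖ ≤ ‖g c‖ + 1 := by
    have h1 : ∀ᶠ z in 𝓝 c, z ∈ O := hO.mem_nhds hc
    have h2 : ∀ᶠ z in 𝓝 c, ‖g z‖ < ‖g c‖ + 1 :=
      hgc.norm.eventually (gt_mem_nhds (by linarith))
    obtain ⟨s, hs, hs'⟩ := Metric.eventually_nhds_iff_ball.1 (h1.and h2)
    refine ⟨s/4, by linarith, ?_, ?_⟩
    · intro z hz; exact (hs' z (by convert hz using 2; ring)).1
    · intro z hz; exact (hs' z (by convert hz using 2; ring)).2.le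
  set C := ‖g c‖ + 1 with hCdef
  have hC : 0 < C := by positivity
  have hd4 : DifferentiableOn ℂ g (ball c (4*r)) := hg.mono hrO
  have hsub : ∀ x ∈ ball c (2*r), ball x r ⊆ ball c (4*r) := by
    intro x hx
    apply ball_subset_ball'
    rw [mem_ball] at hx; linarith
  have hdx : ∀ x ∈ ball c (2*r), DifferentiableAt ℂ g x := fun x hx =>
    hd4.differentiableAt (isOpen_ball.mem_nhds (ball_subset_ball (by linarith) hx))
  have hq : ∀ x ∈ ball c (2*r), ∀ w : U, ‖w‖ < r →
      ‖g (x + w) - g x - fderiv ℂ g x w‖ ≤ 3 * C * (‖w‖ / r)^2 := by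
    intro x hx w hw
    have := quad_rem (z := x + w) hr (hd4.mono (hsub x hx)) (fun z hz => hrb z (hsub x hx hz))
      (by simpa using hw)
    simpa using this
  have hbd : ∀ x ∈ ball c (2*r), ‖fderiv ℂ g x‖ ≤ C / r := fun x hx =>
    cauchy_fderiv hr (hd4.mono (hsub x hx)) (fun z hz => hrb z (hsub x hx hz))
  -- directional derivatives are holomorphic
  have hdir : ∀ w : U, ∀ x ∈ ball c r, DifferentiableAt ℂ (fun y => fderiv ℂ g y w) x := by
    intro w x hx
    have hxsub : ball x (r/2) ⊆ ball c (2*r) := by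
      apply ball_subset_ball'
      rw [mem_ball] at hx; linarith
    obtain ⟨N, hN⟩ := exists_nat_gt (‖w‖ / r)
    have hNr : ‖w‖ < N * r := by rwa [div_lt_iff₀ hr] at hN
    set z : ℕ → ℂ := fun n => ((n + N + 1 : ℕ) : ℂ) with hz
    have hzn : ∀ n, ‖z n‖ = n + N + 1 := by
      intro n; simp only [hz]; rw [Complex.norm_natCast]; push_cast; ring
    have hz0 : ∀ n, z n ≠ 0 := by
      intro n h; have := hzn n; rw [h, norm_zero] at this
      have : (0:ℝ) < n + N + 1 := by positivity
      linarith
    have hzw : ∀ n, ‖(z n)⁻¹ • w‖ < r := by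
      intro n
      rw [norm_smul, norm_inv, hzn, inv_mul_lt_iff₀ (by positivity)]
      have : (0:ℝ) ≤ n := by positivity
      nlinarith
    refine uniform_limit_diff (f := fun n y => z n • (g (y + (z n)⁻¹ • w) - g y))
      (r := r/2) (by linarith) ?_ ?_
    · intro n
      apply DifferentiableOn.const_smul
      apply DifferentiableOn.sub
      · refine hd4.comp (by fun_prop) ?_
        intro y hy
        apply hsub y (hxsub hy)
        simpa using hzw n
      · exact hd4.mono (hxsub.trans (ball_subset_ball (by linarith)))
    · rw [Metric.tendstoUniformlyOn_iff]
      intro e he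
      have hlim : Tendsto (fun n : ℕ => 3 * C * (‖w‖ / r)^2 * (1 / ((n:ℝ) + 1))) atTop (𝓝 0) := by
        simpa using (tendsto_one_div_add_atTop_nhds_zero_nat (𝕜 := ℝ)).const_mul
          (3 * C * (‖w‖ / r)^2)
      filter_upwards [hlim.eventually (gt_mem_nhds he)] with n hn y hy
      refine lt_of_le_of_lt ?_ hn
      have h1 := hq y (hxsub hy) _ (hzw n)
      rw [dist_comm, dist_eq_norm]
      have h2 : z n • (g (y + (z n)⁻¹ • w) - g y) - fderiv ℂ g y w
          = z n • (g (y + (z n)⁻¹ • w) - g y - fderiv ℂ g y ((z n)⁻¹ • w)) := by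
        rw [smul_sub (z n) (g (y + (z n)⁻¹ • w) - g y), map_smul, smul_smul,
          mul_inv_cancel₀ (hz0 n), one_smul]
      rw [h2, norm_smul]
      calc _ ≤ ‖z n‖ * (3 * C * (‖(z n)⁻¹ • w‖ / r)^2) := by gcongr
        _ = 3 * C * (‖w‖ / r)^2 * (1 / ‖z n‖) := by
          rw [norm_smul, norm_inv]
          have : ‖z n‖ ≠ 0 := norm_ne_zero_iff.2 (hz0 n)
          field_simp
        _ ≤ _ := by
          rw [hzn]
          gcongr
          have : (0:ℝ) ≤ N := by positivity
          linarith
  have hcr : c ∈ ball c r := mem_ball_self hr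
  have hsubr : ball c r ⊆ ball c (2*r) := ball_subset_ball (by linarith)
  let L : U →ₗ[ℂ] (U →L[ℂ] E) :=
    { toFun := fun w => fderiv ℂ (fun y => fderiv ℂ g y w) c
      map_add' := by
        intro v w
        simp only [map_add]
        exact fderiv_add (hdir v c hcr) (hdir w c hcr)
      map_smul' := by
        intro a w
        simp only [map_smul, RingHom.id_apply]
        exact fderiv_const_smul (hdir w c hcr) a }
  have hLb : ∀ w, ‖L w‖ ≤ C / r / r * ‖w‖ := by
    intro w
    have := cauchy_fderiv (g := fun y => fderiv ℂ g y w) (C := C / r * ‖w‖) hr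
      (fun x hx => (hdir w x hx).differentiableWithinAt) (fun x hx => by
        refine (ContinuousLinearMap.le_opNorm _ _).trans ?_
        gcongr
        exact hbd x (hsubr hx))
    calc _ ≤ C / r * ‖w‖ / r := this
      _ = _ := by ring
  let B : U →L[ℂ] (U →L[ℂ] E) := L.mkContinuous (C / r / r) hLb
  have hB : HasFDerivAt (fderiv ℂ g) B c := by
    rw [hasFDerivAt_iff_isLittleO_nhds_zero]
    have key : ∀ w : U, ‖w‖ < r →
        ‖fderiv ℂ g (c + w) - fderiv ℂ g c - B w‖ ≤ 3 * C / r^3 * ‖w‖^2 := by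
      intro w hw
      have hxw : ∀ x ∈ ball c r, x + w ∈ ball c (2*r) := by
        intro x hx
        rw [mem_ball, dist_eq_norm] at hx ⊢
        calc ‖x + w - c‖ = ‖(x - c) + w‖ := by congr 1; abel
          _ ≤ ‖x - c‖ + ‖w‖ := norm_add_le _ _
          _ < _ := by linarith
      have d1 : ∀ x ∈ ball c r, HasFDerivAt (fun x => g (x + w)) (fderiv ℂ g (x + w)) x := by
        intro x hx
        have h2 : HasFDerivAt (fun z : U => z + w) (ContinuousLinearMap.id ℂ U) x :=
          (hasFDerivAt_id x).add_const w
        have h3 := HasFDerivAt.comp x (hdx _ (hxw x hx)).hasFDerivAt h2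
        rw [ContinuousLinearMap.comp_id] at h3
        exact h3
      have d2 : ∀ x ∈ ball c r, HasFDerivAt (fun x => g (x + w) - g x - fderiv ℂ g x w)
          (fderiv ℂ g (x + w) - fderiv ℂ g x - fderiv ℂ (fun y => fderiv ℂ g y w) x) x := by
        intro x hx
        exact ((d1 x hx).sub (hdx x (hsubr hx)).hasFDerivAt).sub (hdir w x hx).hasFDerivAt
      have := cauchy_fderiv (g := fun x => g (x + w) - g x - fderiv ℂ g x w)
        (C := 3 * C * (‖w‖ / r)^2) hr
        (fun x hx => (d2 x hx).differentiableAt.differentiableWithinAt)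
        (fun x hx => hq x (hsubr hx) w hw)
      rw [(d2 c hcr).fderiv] at this
      calc _ ≤ 3 * C * (‖w‖ / r)^2 / r := this
        _ = _ := by field_simp
    refine (Asymptotics.IsBigO.of_bound (3 * C / r^3) ?_ :
      _ =O[𝓝 (0:U)] fun w => ‖w‖^2).trans_isLittleO ?_
    · filter_upwards [ball_mem_nhds (0:U) hr] with w hw
      have := key w (by simpa using hw)
      simpa using this
    · have : (fun w : U => ‖w‖^2) = fun w => ‖w‖ * ‖w‖ := by ext; ring
      rw [this]
      have h1 : (fun w : U => ‖w‖ * ‖w‖) =o[𝓝 0] fun w : U => (1:ℝ) * ‖w‖ := by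
        apply Asymptotics.IsLittleO.mul_isBigO _ (Asymptotics.isBigO_refl _ _)
        rw [Asymptotics.isLittleO_one_iff]
        simpa using (continuous_norm (E := U)).tendsto 0
      simp only [one_mul] at h1
      exact h1.of_norm_right
  exact hB.differentiableAt

end Strob

namespace Strob

open Set Metric Filter Topology


universe u
variable {U E F G : Type u} [NormedAddCommGroup U] [NormedSpace ℂ U]
  [NormedAddCommGroup E] [NormedSpace ℂ E]
  [NormedAddCommGroup F] [NormedSpace ℂ F]
  [NormedAddCommGroup G] [NormedSpace ℂ G]
  {I : Type*}

/-- Families `g i θ u`, holomorphic in `u ∈ O`, bounded and Lipschitz in `θ` with constants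
proportional to the weight `a i`. -/
structure LB0 (O : Set U) (a : I → ℝ) (g : I → ℝ → U → E) : Prop where
  diff : ∀ i θ, DifferentiableOn ℂ (g i θ) O
  wnn : ∀ i, 0 ≤ a i
  bdd : ∃ C, 0 ≤ C ∧ ∀ i θ, ∀ u ∈ O, ‖g i θ u‖ ≤ C * a i
  lip : ∃ C, 0 ≤ C ∧ ∀ i θ τ, ∀ u ∈ O, ‖g i θ u - g i τ u‖ ≤ C * a i * |θ - τ|

/-- Families which are `q` times differentiable in `θ`, all derivatives being of class `LB0`. -/
def LB : ℕ → (O : Set U) → (a : I → ℝ) → (g : I → ℝ → U → E) → Prop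
  | 0, O, a, g => LB0 O a g
  | q+1, O, a, g => LB0 O a g ∧ ∃ g' : I → ℝ → U → E,
      (∀ i θ, ∀ u ∈ O, HasDerivAt (fun τ => g i τ u) (g' i θ u) θ) ∧ LB q O a g'

variable {O O' : Set U} {a b : I → ℝ} {g h : I → ℝ → U → E}

theorem LB.zero : ∀ {q : ℕ}, LB q O a g → LB0 O a g
  | 0, h => h
  | _+1, h => h.1

theorem LB.pred : ∀ {q : ℕ} {g : I → ℝ → U → E}, LB (q+1) O a g → LB q O a g
  | 0, _, h => h.1
  | _+1, _, h => by
    obtain ⟨h0, g', hd, hg'⟩ := h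
    exact ⟨h0, g', hd, hg'.pred⟩

theorem LB0.congr (hg : LB0 O a g) (hgh : ∀ i θ, ∀ u ∈ O, g i θ u = h i θ u) : LB0 O a h := by
  refine ⟨fun i θ => (hg.diff i θ).congr (fun u hu => (hgh i θ u hu).symm), hg.wnn, ?_, ?_⟩
  · obtain ⟨C, hC, h1⟩ := hg.bdd
    exact ⟨C, hC, fun i θ u hu => by rw [← hgh i θ u hu]; exact h1 i θ u hu⟩
  · obtain ⟨C, hC, h1⟩ := hg.lip
    exact ⟨C, hC, fun i θ θ' u hu => by
      rw [← hgh i θ u hu, ← hgh i θ' u hu]; exact h1 i θ θ' u hu⟩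

theorem LB.congr {q : ℕ} (hg : LB q O a g) (hgh : ∀ i θ, ∀ u ∈ O, g i θ u = h i θ u) :
    LB q O a h := by
  cases q with
  | zero => exact LB0.congr hg hgh
  | succ q =>
    obtain ⟨h0, g', hd, hg'⟩ := hg
    refine ⟨h0.congr hgh, g', fun i θ u hu => ?_, hg'⟩
    have : (fun τ => h i τ u) = fun τ => g i τ u := by
      ext τ; exact (hgh i τ u hu).symm
    rw [this]; exact hd i θ u hu

theorem LB.weight {q : ℕ} (hg : LB q O a g) (hab : ∀ i, a i = b i) : LB q O b g := by
  have : a = b := funext hab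
  rwa [this] at hg

theorem LB0.mono (hg : LB0 O a g) (hO : O' ⊆ O) : LB0 O' a g := by
  obtain ⟨C, hC, h1⟩ := hg.bdd
  obtain ⟨D, hD, h2⟩ := hg.lip
  exact ⟨fun i θ => (hg.diff i θ).mono hO, hg.wnn, ⟨C, hC, fun i θ u hu => h1 i θ u (hO hu)⟩,
    ⟨D, hD, fun i θ θ' u hu => h2 i θ θ' u (hO hu)⟩⟩

theorem LB.mono : ∀ {q : ℕ} {g : I → ℝ → U → E} (_ : LB q O a g) (_ : O' ⊆ O), LB q O' a g
  | 0, _, hg, hO => LB0.mono hg hO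
  | _+1, _, hg, hO => by
    obtain ⟨h0, g', hd, hg'⟩ := hg
    exact ⟨h0.mono hO, g', fun i θ u hu => hd i θ u (hO hu), hg'.mono hO⟩

theorem LB0.add (hg : LB0 O a g) (hh : LB0 O a h) :
    LB0 O a (fun i θ u => g i θ u + h i θ u) := by
  obtain ⟨C, hC, h1⟩ := hg.bdd
  obtain ⟨D, hD, h2⟩ := hg.lip
  obtain ⟨C', hC', h1'⟩ := hh.bdd
  obtain ⟨D', hD', h2'⟩ := hh.lip
  refine ⟨fun i θ => (hg.diff i θ).add (hh.diff i θ), hg.wnn, ⟨C + C', by positivity, ?_⟩,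
    ⟨D + D', by positivity, ?_⟩⟩
  · intro i θ u hu
    refine (norm_add_le _ _).trans ?_
    have := h1 i θ u hu
    have := h1' i θ u hu
    linarith
  · intro i θ θ' u hu
    have := h2 i θ θ' u hu
    have := h2' i θ θ' u hu
    rw [add_sub_add_comm]
    refine (norm_add_le _ _).trans ?_
    linarith

theorem LB.add : ∀ {q : ℕ} {g h : I → ℝ → U → E} (_ : LB q O a g) (_ : LB q O a h),
    LB q O a (fun i θ u => g i θ u + h i θ u)
  | 0, _, _, hg, hh => LB0.add hg hh
  | _+1, _, _, hg, hh => by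
    obtain ⟨h0, g', hd, hg'⟩ := hg
    obtain ⟨k0, h', kd, hh'⟩ := hh
    exact ⟨h0.add k0, _, fun i θ u hu => (hd i θ u hu).add (kd i θ u hu), hg'.add hh'⟩

theorem LB0.bilin (B : E →L[ℂ] F →L[ℂ] G) {h : I → ℝ → U → F}
    (hg : LB0 O a g) (hh : LB0 O b h) :
    LB0 O (fun i => a i * b i) (fun i θ u => B (g i θ u) (h i θ u)) := by
  obtain ⟨C, hC, h1⟩ := hg.bdd
  obtain ⟨D, hD, h2⟩ := hg.lip
  obtain ⟨C', hC', h1'⟩ := hh.bdd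
  obtain ⟨D', hD', h2'⟩ := hh.lip
  have ha := hg.wnn
  have hb := hh.wnn
  refine ⟨fun i θ => ?_, fun i => mul_nonneg (ha i) (hb i),
    ⟨‖B‖ * C * C', by positivity, ?_⟩, ⟨‖B‖ * (D * C' + C * D'), by positivity, ?_⟩⟩
  · have := B.differentiable.comp_differentiableOn (hg.diff i θ)
    exact DifferentiableOn.clm_apply this (hh.diff i θ)
  · intro i θ u hu
    have hai := ha i
    have hbi := hb i
    calc _ ≤ ‖B‖ * ‖g i θ u‖ * ‖h i θ u‖ := B.le_opNorm₂ _ _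
      _ ≤ ‖B‖ * (C * a i) * (C' * b i) := by
        gcongr
        · exact h1 i θ u hu
        · exact h1' i θ u hu
      _ = _ := by ring
  · intro i θ θ' u hu
    have hai := ha i
    have hbi := hb i
    have e : B (g i θ u) (h i θ u) - B (g i θ' u) (h i θ' u)
        = B (g i θ u - g i θ' u) (h i θ u) + B (g i θ' u) (h i θ u - h i θ' u) := by
      simp only [map_sub, sub_apply]; abel
    rw [e]
    calc _ ≤ ‖B‖ * ‖g i θ u - g i θ' u‖ * ‖h i θ u‖ +
          ‖B‖ * ‖g i θ' u‖ * ‖h i θ u - h i θ' u‖ :=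
        (norm_add_le _ _).trans (add_le_add (B.le_opNorm₂ _ _) (B.le_opNorm₂ _ _))
      _ ≤ ‖B‖ * (D * a i * |θ - θ'|) * (C' * b i) +
          ‖B‖ * (C * a i) * (D' * b i * |θ - θ'|) := by
        gcongr
        · exact h2 i θ θ' u hu
        · exact h1' i θ u hu
        · exact h1 i θ' u hu
        · exact h2' i θ θ' u hu
      _ = _ := by ring

theorem LB.bilin (B : E →L[ℂ] F →L[ℂ] G) : ∀ {q : ℕ} {g : I → ℝ → U → E} {h : I → ℝ → U → F}
    (_ : LB q O a g) (_ : LB q O b h),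
    LB q O (fun i => a i * b i) (fun i θ u => B (g i θ u) (h i θ u))
  | 0, _, _, hg, hh => LB0.bilin B hg hh
  | q+1, _, _, hg, hh => by
    have hgq := hg.pred
    have hhq := hh.pred
    obtain ⟨h0, g', hd, hg'⟩ := hg
    obtain ⟨k0, h', kd, hh'⟩ := hh
    refine ⟨h0.bilin B k0, _, fun i θ u hu => ?_, (hgq.bilin B hh').add (hg'.bilin B hhq)⟩
    exact (B.bilinearRestrictScalars ℝ).hasDerivAt_of_bilinear (fun _ => hd i θ u hu) (fun _ => kd i θ u hu)

theorem LB0.of_const {g : I → U → E} (ha : ∀ i, 0 ≤ a i)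
    (hd : ∀ i, DifferentiableOn ℂ (g i) O)
    (hb : ∃ C, 0 ≤ C ∧ ∀ i, ∀ u ∈ O, ‖g i u‖ ≤ C * a i) :
    LB0 O a (fun i _ u => g i u) := by
  obtain ⟨C, hC, h1⟩ := hb
  exact ⟨fun i _ => hd i, ha, ⟨C, hC, fun i _ u hu => h1 i u hu⟩, ⟨0, le_rfl, by simp⟩⟩

theorem LB.of_const (ha : ∀ i, 0 ≤ a i) : ∀ {q : ℕ} {g : I → U → E}
    (_ : ∀ i, DifferentiableOn ℂ (g i) O)
    (_ : ∃ C, 0 ≤ C ∧ ∀ i, ∀ u ∈ O, ‖g i u‖ ≤ C * a i),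
    LB q O a (fun i _ u => g i u)
  | 0, _, hd, hb => LB0.of_const ha hd hb
  | q+1, _, hd, hb => ⟨LB0.of_const ha hd hb, fun _ _ _ => 0,
      fun _ _ _ _ => hasDerivAt_const _ _,
      LB.of_const ha (g := fun _ _ => 0) (fun _ => differentiableOn_const _) ⟨0, le_rfl, by simp⟩⟩

theorem LB.clm {q : ℕ} (A : E →L[ℂ] F) (hg : LB q O a g) :
    LB q O a (fun i θ u => A (g i θ u)) := by
  have hc : LB q O (fun _ : I => (1:ℝ)) (fun _ _ _ => A) :=
    LB.of_const (fun _ => zero_le_one) (fun _ => differentiableOn_const _)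
      ⟨‖A‖, norm_nonneg _, by simp⟩
  exact (hc.bilin (ContinuousLinearMap.id ℂ (E →L[ℂ] F)) hg).weight (by simp)

theorem LB.neg {q : ℕ} (hg : LB q O a g) : LB q O a (fun i θ u => - g i θ u) := by
  simpa using hg.clm (-ContinuousLinearMap.id ℂ E)

theorem LB.sub {q : ℕ} (hg : LB q O a g) (hh : LB q O a h) :
    LB q O a (fun i θ u => g i θ u - h i θ u) := by
  simpa [sub_eq_add_neg] using hg.add hh.neg

theorem LB0.rsmul {c : I → ℝ} (hc : ∀ i, 0 ≤ c i) (hg : LB0 O a g) :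
    LB0 O (fun i => c i * a i) (fun i θ u => c i • g i θ u) := by
  obtain ⟨C, hC, h1⟩ := hg.bdd
  obtain ⟨D, hD, h2⟩ := hg.lip
  refine ⟨fun i θ => (hg.diff i θ).const_smul (c i), fun i => mul_nonneg (hc i) (hg.wnn i),
    ⟨C, hC, ?_⟩, ⟨D, hD, ?_⟩⟩
  · intro i θ u hu
    rw [norm_smul, Real.norm_of_nonneg (hc i)]
    have := mul_le_mul_of_nonneg_left (h1 i θ u hu) (hc i)
    linarith
  · intro i θ θ' u hu
    rw [← smul_sub, norm_smul, Real.norm_of_nonneg (hc i)]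
    have := mul_le_mul_of_nonneg_left (h2 i θ θ' u hu) (hc i)
    linarith

theorem LB.rsmul {c : I → ℝ} (hc : ∀ i, 0 ≤ c i) : ∀ {q : ℕ} {g : I → ℝ → U → E}
    (_ : LB q O a g), LB q O (fun i => c i * a i) (fun i θ u => c i • g i θ u)
  | 0, _, hg => LB0.rsmul hc hg
  | q+1, _, hg => by
    obtain ⟨h0, g', hd, hg'⟩ := hg
    exact ⟨h0.rsmul hc, _, fun i θ u hu => (hd i θ u hu).const_smul (c i), hg'.rsmul hc⟩

theorem LB0.cont (hg : LB0 O a g) (i : I) {u : U} (hu : u ∈ O) :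
    Continuous (fun θ => g i θ u) := by
  obtain ⟨D, hD, h2⟩ := hg.lip
  have : LipschitzWith (D * a i).toNNReal (fun θ => g i θ u) := by
    apply LipschitzWith.of_dist_le_mul
    intro x y
    rw [dist_eq_norm, Real.dist_eq, Real.coe_toNNReal _ (mul_nonneg hD (hg.wnn i))]
    exact h2 i x y u hu
  exact this.continuous

theorem hasDerivAt_of_quad {φ : ℝ → E} {d : E} {θ C : ℝ}
    (h : ∀ τ, ‖φ τ - φ θ - (τ - θ) • d‖ ≤ C * |τ - θ|^2) : HasDerivAt φ d θ := by
  rw [hasDerivAt_iff_isLittleO]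
  refine (Asymptotics.IsBigO.of_bound C (Eventually.of_forall ?_) :
      _ =O[𝓝 θ] fun τ => |τ - θ|^2).trans_isLittleO ?_
  · intro τ
    have := h τ
    simpa using this
  · have h1 : (fun τ : ℝ => |τ - θ| * |τ - θ|) =o[𝓝 θ] fun τ : ℝ => (1:ℝ) * |τ - θ| := by
      apply Asymptotics.IsLittleO.mul_isBigO _ (Asymptotics.isBigO_refl _ _)
      rw [Asymptotics.isLittleO_one_iff]
      have : Continuous (fun τ : ℝ => |τ - θ|) := by fun_prop
      simpa using this.tendsto θ
    have e : (fun τ : ℝ => |τ - θ|^2) = fun τ => |τ - θ| * |τ - θ| := by ext; ring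
    rw [e]
    simp only [one_mul] at h1
    exact Asymptotics.IsLittleO.of_norm_right h1

/-- Uniform first order expansion in `θ`. -/
theorem LB0.expand {g' : I → ℝ → U → E}
    (hd : ∀ i θ, ∀ u ∈ O, HasDerivAt (fun τ => g i τ u) (g' i θ u) θ) (hg' : LB0 O a g') :
    ∃ C, 0 ≤ C ∧ ∀ i θ τ, ∀ u ∈ O,
      ‖g i τ u - g i θ u - (τ - θ) • g' i θ u‖ ≤ C * a i * |τ - θ|^2 := by
  obtain ⟨D, hD, h2⟩ := hg'.lip
  refine ⟨D, hD, fun i θ τ u hu => ?_⟩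
  have hai := hg'.wnn i
  have key : ∀ s ∈ uIcc θ τ,
      HasDerivWithinAt (fun s => g i s u - s • g' i θ u) (g' i s u - g' i θ u) (uIcc θ τ) s := by
    intro s _
    have := (hd i s u hu).sub ((hasDerivAt_id s).smul_const (g' i θ u))
    rw [one_smul] at this
    exact this.hasDerivWithinAt
  have hb : ∀ s ∈ uIcc θ τ, ‖g' i s u - g' i θ u‖ ≤ D * a i * |τ - θ| := by
    intro s hs
    refine (h2 i s θ u hu).trans ?_
    have : |s - θ| ≤ |τ - θ| := abs_sub_left_of_mem_uIcc hs
    gcongr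
  have := Convex.norm_image_sub_le_of_norm_hasDerivWithin_le key hb (convex_uIcc θ τ)
    left_mem_uIcc right_mem_uIcc
  rw [Real.norm_eq_abs] at this
  calc _ = ‖g i τ u - τ • g' i θ u - (g i θ u - θ • g' i θ u)‖ := by
        congr 1; rw [sub_smul]; abel
    _ ≤ _ := this
    _ = _ := by ring

theorem LB0.fderiv [CompleteSpace E] {r : ℝ} (hO : IsOpen O) (hr : 0 < r)
    (hsh : ∀ u ∈ O', ball u r ⊆ O) (hg : LB0 O a g) :
    LB0 O' a (fun i θ u => fderiv ℂ (g i θ) u) := by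
  obtain ⟨C, hC, h1⟩ := hg.bdd
  obtain ⟨D, hD, h2⟩ := hg.lip
  have hsub : O' ⊆ O := fun u hu => hsh u hu (mem_ball_self hr)
  refine ⟨fun i θ => (diffAt_fderiv hO (hg.diff i θ)).mono hsub, hg.wnn,
    ⟨C / r, by positivity, ?_⟩, ⟨D / r, by positivity, ?_⟩⟩
  · intro i θ u hu
    have := cauchy_fderiv hr ((hg.diff i θ).mono (hsh u hu))
      (fun z hz => h1 i θ z (hsh u hu hz))
    calc _ ≤ C * a i / r := this
      _ = _ := by ring
  · intro i θ θ' u hu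
    have := cauchy_fderiv (g := g i θ - g i θ') hr
      (((hg.diff i θ).sub (hg.diff i θ')).mono (hsh u hu))
      (fun z hz => h2 i θ θ' z (hsh u hu hz))
    rw [fderiv_sub ((hg.diff i θ).differentiableAt (hO.mem_nhds (hsub hu)))
      ((hg.diff i θ').differentiableAt (hO.mem_nhds (hsub hu)))] at this
    calc _ ≤ D * a i * |θ - θ'| / r := this
      _ = _ := by ring

theorem LB.fderiv [CompleteSpace E] {r : ℝ} (hO : IsOpen O) (hr : 0 < r)
    (hsh : ∀ u ∈ O', ball u r ⊆ O) : ∀ {q : ℕ} {g : I → ℝ → U → E} (_ : LB q O a g),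
    LB q O' a (fun i θ u => fderiv ℂ (g i θ) u)
  | 0, _, hg => LB0.fderiv hO hr hsh hg
  | q+1, g, hg => by
    obtain ⟨h0, g', hd, hg'⟩ := hg
    have hsub : O' ⊆ O := fun u hu => hsh u hu (mem_ball_self hr)
    refine ⟨h0.fderiv hO hr hsh, fun i θ u => _root_.fderiv ℂ (g' i θ) u, fun i θ u hu => ?_,
      hg'.fderiv hO hr hsh⟩
    obtain ⟨C, hC, hexp⟩ := LB0.expand hd hg'.zero
    apply hasDerivAt_of_quad (C := C * a i / r)
    intro τ
    have d1 := h0.diff i τ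
    have d2 := h0.diff i θ
    have d3 := hg'.zero.diff i θ
    have hn := hO.mem_nhds (hsub hu)
    have := cauchy_fderiv (g := g i τ - g i θ - (τ - θ) • g' i θ) hr
      (((d1.sub d2).sub (d3.const_smul (τ - θ))).mono (hsh u hu))
      (fun z hz => hexp i θ τ z (hsh u hu hz))
    rw [fderiv_sub ((d1.differentiableAt hn).sub (d2.differentiableAt hn))
      ((d3.differentiableAt hn).const_smul (τ - θ)),
      fderiv_sub (d1.differentiableAt hn) (d2.differentiableAt hn),
      fderiv_const_smul (d3.differentiableAt hn)] at this
    calc _ ≤ C * a i * |τ - θ|^2 / r := this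
      _ = _ := by ring

end Strob

namespace Strob

open Set Metric Filter Topology


universe u
variable {U E F G : Type u} [NormedAddCommGroup U] [NormedSpace ℂ U]
  [NormedAddCommGroup E] [NormedSpace ℂ E]
  [NormedAddCommGroup F] [NormedSpace ℂ F]
  [NormedAddCommGroup G] [NormedSpace ℂ G]
  {I : Type*}
variable {O O' : Set U} {a b : I → ℝ} {g h : I → ℝ → U → E}

theorem ball_sub_thick {S : Set U} {ρ s : ℝ} {x : U} (hx : x ∈ thickening (ρ - s) S) :
    ball x s ⊆ thickening ρ S := by
  intro y hy
  rw [mem_thickening_iff] at hx ⊢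
  obtain ⟨z, hz, hxz⟩ := hx
  refine ⟨z, hz, ?_⟩
  rw [mem_ball] at hy
  have := dist_triangle y x z
  linarith

theorem thick_lip {S : Set U} {ρ s C : ℝ} (hs : 0 < s) {f : U → E}
    (hf : DifferentiableOn ℂ f (thickening ρ S)) (hb : ∀ x ∈ thickening ρ S, ‖f x‖ ≤ C)
    {x y : U} (hx : x ∈ thickening (ρ - s) S) (hy : y ∈ thickening ρ S) :
    ‖f y - f x‖ ≤ 2 * C / s * ‖y - x‖ := by
  have hsub := ball_sub_thick hx
  have hxm : x ∈ thickening ρ S := hsub (mem_ball_self hs)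
  have h2 : ∀ z ∈ thickening ρ S, ‖f z - f x‖ ≤ 2 * C := by
    intro z hz
    refine (norm_sub_le _ _).trans ?_
    have := hb z hz
    have := hb x hxm
    linarith
  by_cases hxy : y ∈ ball x s
  · have := Complex.dist_le_div_mul_dist_of_mapsTo_ball (R₂ := 2 * C) (hf.mono hsub) (fun z hz => by
      rw [mem_closedBall, dist_eq_norm]; exact h2 z (hsub hz)) hxy
    rwa [dist_eq_norm, dist_eq_norm] at this
  · refine (h2 y hy).trans ?_
    rw [mem_ball, dist_eq_norm, not_lt] at hxy
    have hC : 0 ≤ C := (norm_nonneg _).trans (hb x hxm)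
    calc 2 * C = 2 * C / s * s := by field_simp
      _ ≤ _ := by gcongr

theorem thick_mono {S : Set U} {ρ s : ℝ} (hs : 0 < s) :
    thickening (ρ - s) S ⊆ thickening ρ S := thickening_mono (by linarith) S

theorem LB0.comp {S : Set U} {ρ s : ℝ} (hs : 0 < s) {f : I → ℝ → U → E} {Φ : I → ℝ → U → U}
    (hf : LB0 (thickening ρ S) a f) (hΦ : LB0 O (fun _ => 1) Φ)
    (hm : ∀ i θ, ∀ u ∈ O, Φ i θ u ∈ thickening (ρ - s) S) :
    LB0 O a (fun i θ u => f i θ (Φ i θ u)) := by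
  obtain ⟨C, hC, h1⟩ := hf.bdd
  obtain ⟨D, hD, h2⟩ := hf.lip
  obtain ⟨D', hD', h2'⟩ := hΦ.lip
  have hm' : ∀ i θ, ∀ u ∈ O, Φ i θ u ∈ thickening ρ S := fun i θ u hu =>
    thick_mono hs (hm i θ u hu)
  refine ⟨fun i θ => (hf.diff i θ).comp (hΦ.diff i θ) (hm' i θ), hf.wnn,
    ⟨C, hC, fun i θ u hu => h1 i θ _ (hm' i θ u hu)⟩, ⟨D + 2 * C / s * D', by positivity, ?_⟩⟩
  intro i θ θ' u hu
  have hai := hf.wnn i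
  have e1 := h2 i θ θ' _ (hm' i θ u hu)
  have e2 := thick_lip hs (hf.diff i θ') (h1 i θ') (hm i θ' u hu) (hm' i θ u hu)
  have e3 := h2' i θ θ' u hu
  calc _ = ‖(f i θ (Φ i θ u) - f i θ' (Φ i θ u)) + (f i θ' (Φ i θ u) - f i θ' (Φ i θ' u))‖ := by
        congr 1; abel
    _ ≤ _ := norm_add_le _ _
    _ ≤ D * a i * |θ - θ'| + 2 * (C * a i) / s * (D' * 1 * |θ - θ'|) := by
        gcongr
        refine e2.trans ?_
        gcongr
    _ = _ := by ring

theorem hasDerivAt_comp_aux {S : Set U} {ρ : ℝ} {f f' : ℝ → U → E} {Φ : ℝ → U} {Φ' : U}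
    {θ C D : ℝ} (hfd : DifferentiableAt ℂ (f θ) (Φ θ))
    (hexp : ∀ τ, ∀ u ∈ thickening ρ S, ‖f τ u - f θ u - (τ - θ) • f' θ u‖ ≤ C * |τ - θ|^2)
    (hf' : ∀ x ∈ thickening ρ S, ‖f' θ x - f' θ (Φ θ)‖ ≤ D * ‖x - Φ θ‖)
    (hΦ : HasDerivAt Φ Φ' θ) (hm : ∀ τ, Φ τ ∈ thickening ρ S)
    (hl : ∃ L, ∀ τ, ‖Φ τ - Φ θ‖ ≤ L * |τ - θ|) (hD : 0 ≤ D) :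
    HasDerivAt (fun τ => f τ (Φ τ)) (f' θ (Φ θ) + fderiv ℂ (f θ) (Φ θ) Φ') θ := by
  obtain ⟨L, hL⟩ := hl
  have h1 : HasDerivAt (fun τ => f τ (Φ τ) - f θ (Φ τ)) (f' θ (Φ θ)) θ := by
    apply hasDerivAt_of_quad (C := C + D * L)
    intro τ
    have e1 := hexp τ _ (hm τ)
    have e2 := hf' _ (hm τ)
    calc _ = ‖(f τ (Φ τ) - f θ (Φ τ) - (τ - θ) • f' θ (Φ τ)) +
          (τ - θ) • (f' θ (Φ τ) - f' θ (Φ θ))‖ := by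
          congr 1; rw [smul_sub]; abel
      _ ≤ C * |τ - θ|^2 + |τ - θ| * (D * (L * |τ - θ|)) := by
          refine (norm_add_le _ _).trans ?_
          rw [norm_smul, Real.norm_eq_abs]
          gcongr
          refine e2.trans ?_
          gcongr
          exact hL τ
      _ = _ := by ring
  have h2 : HasDerivAt (fun τ => f θ (Φ τ)) (fderiv ℂ (f θ) (Φ θ) Φ') θ := by
    have := (hfd.hasFDerivAt.restrictScalars ℝ).comp_hasDerivAt θ hΦ
    exact this
  have := h1.add h2
  refine this.congr_of_eventuallyEq (Eventually.of_forall fun τ => ?_)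
  simp

theorem LB.comp {S : Set U} : ∀ {q : ℕ} {E : Type u} [NormedAddCommGroup E] [NormedSpace ℂ E]
    [CompleteSpace E] {ρ s : ℝ} (_ : 0 < s) {f : I → ℝ → U → E} {Φ : I → ℝ → U → U}
    (_ : LB q (thickening ρ S) (fun _ => 1) f) (_ : LB q O (fun _ => 1) Φ)
    (_ : ∀ i θ, ∀ u ∈ O, Φ i θ u ∈ thickening (ρ - s) S),
    LB q O (fun _ => 1) (fun i θ u => f i θ (Φ i θ u))
  | 0, _, _, _, _, _, _, hs, _, _, hf, hΦ, hm => LB0.comp hs hf hΦ hm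
  | q+1, E, _, _, _, ρ, s, hs, f, Φ, hf, hΦ, hm => by
    have hfq := hf.pred
    have hΦq := hΦ.pred
    obtain ⟨f0, f', fd, hf'⟩ := hf
    obtain ⟨Φ0, Φ', Φd, hΦ'⟩ := hΦ
    have hdf : LB q (thickening (ρ - s/2) S) (fun _ => 1)
        (fun i θ u => _root_.fderiv ℂ (f i θ) u) :=
      hfq.fderiv isOpen_thickening (r := s/2) (by linarith) (fun u hu => ball_sub_thick hu)
    have hm2 : ∀ i θ, ∀ u ∈ O, Φ i θ u ∈ thickening (ρ - s/2 - s/2) S := by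
      intro i θ u hu
      have := hm i θ u hu
      convert this using 2; ring
    have c1 := LB.comp hs hf' hΦq hm
    have c2 := LB.comp (by linarith : 0 < s/2) hdf hΦq hm2
    have c3 := c2.bilin (ContinuousLinearMap.id ℂ (U →L[ℂ] E)) hΦ'
    refine ⟨f0.comp hs Φ0 hm, _, fun i θ u hu => ?_, c1.add (c3.weight (by simp))⟩
    obtain ⟨C, hC, hexp⟩ := LB0.expand fd hf'.zero
    obtain ⟨C', hC', hb'⟩ := hf'.zero.bdd
    obtain ⟨L, hL, hlip⟩ := Φ0.lip
    have hm' : ∀ τ, Φ i τ u ∈ thickening ρ S := fun τ => thick_mono hs (hm i τ u hu)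
    refine hasDerivAt_comp_aux (S := S) (ρ := ρ) (f := f i) (f' := f' i) (Φ := fun τ => Φ i τ u)
      (C := C) (D := 2 * C' / s)
      ((f0.diff i θ).differentiableAt (isOpen_thickening.mem_nhds (hm' θ))) ?_ ?_
      (Φd i θ u hu) hm' ⟨L, ?_⟩ (by positivity)
    · intro τ v hv
      simpa using hexp i θ τ v hv
    · intro x hx
      exact thick_lip hs (hf'.zero.diff i θ) (fun x hx => by simpa using hb' i θ x hx)
        (hm i θ u hu) hx
    · intro τ
      simpa using hlip i τ θ u hu

/-- Base case of the difference lemma. -/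
theorem LB0.comp_sub [CompleteSpace E] {S : Set U} {ρ s : ℝ} (hs : 0 < s) {f : I → ℝ → U → E}
    {Φ Ψ : I → ℝ → U → U}
    (hf : LB0 (thickening ρ S) (fun _ => 1) f) (hΦ : LB0 O (fun _ => 1) Φ)
    (hΨ : LB0 O (fun _ => 1) Ψ) (hD : LB0 O a (fun i θ u => Φ i θ u - Ψ i θ u))
    (hm : ∀ t ∈ Icc (0:ℝ) 1, ∀ i θ, ∀ u ∈ O,
      Ψ i θ u + t • (Φ i θ u - Ψ i θ u) ∈ thickening (ρ - s) S) :
    LB0 O a (fun i θ u => f i θ (Φ i θ u) - f i θ (Ψ i θ u)) := by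
  have hm' : ∀ t ∈ Icc (0:ℝ) 1, ∀ i θ, ∀ u ∈ O,
      Ψ i θ u + t • (Φ i θ u - Ψ i θ u) ∈ thickening ρ S := fun t ht i θ u hu =>
    thick_mono hs (hm t ht i θ u hu)
  have hmΦ : ∀ i θ, ∀ u ∈ O, Φ i θ u ∈ thickening ρ S := by
    intro i θ u hu; simpa using hm' 1 (by simp) i θ u hu
  have hmΨ : ∀ i θ, ∀ u ∈ O, Ψ i θ u ∈ thickening ρ S := by
    intro i θ u hu; simpa using hm' 0 (by simp) i θ u hu
  -- the interpolated family, indexed by `I × [0,1]`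
  let J := I × Icc (0:ℝ) 1
  have hD1 : LB0 (I := J) O (fun _ => 1)
      (fun j θ u => (j.2 : ℝ) • (Φ j.1 θ u - Ψ j.1 θ u)) := by
    obtain ⟨C1, hC1, b1⟩ := hΦ.bdd
    obtain ⟨C2, hC2, b2⟩ := hΨ.bdd
    obtain ⟨D1, hD1, l1⟩ := hΦ.lip
    obtain ⟨D2, hD2, l2⟩ := hΨ.lip
    refine ⟨fun j θ => (hD.diff j.1 θ).const_smul (j.2 : ℝ), fun _ => zero_le_one,
      ⟨C1 + C2, by positivity, ?_⟩, ⟨D1 + D2, by positivity, ?_⟩⟩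
    · intro j θ u hu
      rw [norm_smul, Real.norm_of_nonneg j.2.2.1]
      have e1 := b1 j.1 θ u hu
      have e2 := b2 j.1 θ u hu
      calc _ ≤ 1 * ‖Φ j.1 θ u - Ψ j.1 θ u‖ := by gcongr; exact j.2.2.2
        _ ≤ _ := by
          rw [one_mul]; refine (norm_sub_le _ _).trans ?_; linarith
    · intro j θ θ' u hu
      rw [← smul_sub, norm_smul, Real.norm_of_nonneg j.2.2.1]
      have e1 := l1 j.1 θ θ' u hu
      have e2 := l2 j.1 θ θ' u hu
      calc _ ≤ 1 * ‖(Φ j.1 θ u - Ψ j.1 θ u) - (Φ j.1 θ' u - Ψ j.1 θ' u)‖ := by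
            gcongr; exact j.2.2.2
        _ = ‖(Φ j.1 θ u - Φ j.1 θ' u) - (Ψ j.1 θ u - Ψ j.1 θ' u)‖ := by
            rw [one_mul]; congr 1; abel
        _ ≤ _ := by
          refine (norm_sub_le _ _).trans ?_; linarith
  have hre : ∀ {E' : Type u} [NormedAddCommGroup E'] [NormedSpace ℂ E'] {O1 : Set U} {c : I → ℝ}
      {k : I → ℝ → U → E'}, LB0 O1 c k → LB0 (I := J) O1 (fun j => c j.1) (fun j => k j.1) := by
    intro E' _ _ O1 c k hk
    obtain ⟨C1, hC1, b1⟩ := hk.bdd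
    obtain ⟨D1, hD1, l1⟩ := hk.lip
    exact ⟨fun j => hk.diff j.1, fun j => hk.wnn j.1, ⟨C1, hC1, fun j => b1 j.1⟩,
      ⟨D1, hD1, fun j => l1 j.1⟩⟩
  have hIntp : LB0 (I := J) O (fun _ => 1)
      (fun j θ u => Ψ j.1 θ u + (j.2 : ℝ) • (Φ j.1 θ u - Ψ j.1 θ u)) := (hre hΨ).add hD1
  have hdf : LB0 (thickening (ρ - s/2) S) (fun _ : I => (1:ℝ))
      (fun i θ u => _root_.fderiv ℂ (f i θ) u) :=
    hf.fderiv isOpen_thickening (r := s/2) (by linarith) (fun u hu => ball_sub_thick hu)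
  have hcomp := LB0.comp (by linarith : 0 < s/2) (hre hdf) hIntp (fun j θ u hu => by
    have := hm j.2 j.2.2 j.1 θ u hu
    convert this using 2; ring)
  have hprod := hcomp.bilin (ContinuousLinearMap.id ℂ (U →L[ℂ] E)) (hre hD)
  obtain ⟨C, hC, hb⟩ := hprod.bdd
  obtain ⟨L, hL, hl⟩ := hprod.lip
  have hder : ∀ i θ, ∀ u ∈ O, ∀ t ∈ Icc (0:ℝ) 1,
      HasDerivWithinAt (fun t : ℝ => f i θ (Ψ i θ u + t • (Φ i θ u - Ψ i θ u)))
      (_root_.fderiv ℂ (f i θ) (Ψ i θ u + t • (Φ i θ u - Ψ i θ u)) (Φ i θ u - Ψ i θ u))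
      (Icc 0 1) t := by
    intro i θ u hu t ht
    have d1 : DifferentiableAt ℂ (f i θ) (Ψ i θ u + t • (Φ i θ u - Ψ i θ u)) :=
      (hf.diff i θ).differentiableAt (isOpen_thickening.mem_nhds (hm' t ht i θ u hu))
    have d2 : HasDerivAt (fun t : ℝ => Ψ i θ u + t • (Φ i θ u - Ψ i θ u))
        (Φ i θ u - Ψ i θ u) t := by
      have := ((hasDerivAt_id t).smul_const (Φ i θ u - Ψ i θ u)).const_add (Ψ i θ u)
      rw [one_smul] at this
      exact this
    exact ((d1.hasFDerivAt.restrictScalars ℝ).comp_hasDerivAt t d2).hasDerivWithinAt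
  refine ⟨fun i θ => ((hf.diff i θ).comp (hΦ.diff i θ) (hmΦ i θ)).sub
      ((hf.diff i θ).comp (hΨ.diff i θ) (hmΨ i θ)), hD.wnn, ⟨C, hC, ?_⟩, ⟨L, hL, ?_⟩⟩
  · intro i θ u hu
    have := Convex.norm_image_sub_le_of_norm_hasDerivWithin_le (C := C * a i) (hder i θ u hu)
      (fun t ht => by simpa using hb (i, ⟨t, ht⟩) θ u hu) (convex_Icc 0 1)
      (left_mem_Icc.2 zero_le_one) (right_mem_Icc.2 zero_le_one)
    simpa using this
  · intro i θ θ' u hu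
    have := Convex.norm_image_sub_le_of_norm_hasDerivWithin_le (C := L * a i * |θ - θ'|)
      (fun t ht => (hder i θ u hu t ht).sub (hder i θ' u hu t ht))
      (fun t ht => by simpa using hl (i, ⟨t, ht⟩) θ θ' u hu) (convex_Icc 0 1)
      (left_mem_Icc.2 zero_le_one) (right_mem_Icc.2 zero_le_one)
    simp only [Pi.sub_apply, one_smul, zero_smul, add_zero, add_sub_cancel, sub_zero, norm_one,
      mul_one] at this
    refine le_trans (le_of_eq ?_) this
    congr 1; abel

theorem LB.comp_sub {S : Set U} : ∀ {q : ℕ} {E : Type u} [NormedAddCommGroup E] [NormedSpace ℂ E]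
    [CompleteSpace E] {ρ s : ℝ} (_ : 0 < s) {f : I → ℝ → U → E} {Φ Ψ : I → ℝ → U → U}
    (_ : LB q (thickening ρ S) (fun _ => 1) f) (_ : LB q O (fun _ => 1) Φ)
    (_ : LB q O (fun _ => 1) Ψ) (_ : LB q O a (fun i θ u => Φ i θ u - Ψ i θ u))
    (_ : ∀ t ∈ Icc (0:ℝ) 1, ∀ i θ, ∀ u ∈ O,
      Ψ i θ u + t • (Φ i θ u - Ψ i θ u) ∈ thickening (ρ - s) S),
    LB q O a (fun i θ u => f i θ (Φ i θ u) - f i θ (Ψ i θ u))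
  | 0, _, _, _, _, _, _, hs, _, _, _, hf, hΦ, hΨ, hD, hm => LB0.comp_sub hs hf hΦ hΨ hD hm
  | q+1, E, _, _, _, ρ, s, hs, f, Φ, Ψ, hf, hΦ, hΨ, hD, hm => by
    have hmΦ : ∀ i θ, ∀ u ∈ O, Φ i θ u ∈ thickening (ρ - s) S := by
      intro i θ u hu; simpa using hm 1 (by simp) i θ u hu
    have hmΨ : ∀ i θ, ∀ u ∈ O, Ψ i θ u ∈ thickening (ρ - s) S := by
      intro i θ u hu; simpa using hm 0 (by simp) i θ u hu
    have hfq := hf.pred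
    have hΦq := hΦ.pred
    have hΨq := hΨ.pred
    have hDq := hD.pred
    obtain ⟨f0, f', fd, hf'⟩ := hf
    obtain ⟨Φ0, Φ', Φd, hΦ'⟩ := hΦ
    obtain ⟨Ψ0, Ψ', Ψd, hΨ'⟩ := hΨ
    obtain ⟨D0, D', Dd, hD'⟩ := hD
    have hD'' : LB q O a (fun i θ u => Φ' i θ u - Ψ' i θ u) := by
      refine hD'.congr fun i θ u hu => ?_
      exact (Dd i θ u hu).unique ((Φd i θ u hu).sub (Ψd i θ u hu))
    have hdf : LB q (thickening (ρ - s/2) S) (fun _ => 1)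
        (fun i θ u => _root_.fderiv ℂ (f i θ) u) :=
      hfq.fderiv isOpen_thickening (r := s/2) (by linarith) (fun u hu => ball_sub_thick hu)
    have er : ρ - s/2 - s/2 = ρ - s := by ring
    have c1 := LB.comp_sub hs hf' hΦq hΨq hDq hm
    have c2 := LB.comp_sub (by linarith : 0 < s/2) hdf hΦq hΨq hDq (by rw [er]; exact hm)
    have c3 := LB.comp (by linarith : 0 < s/2) hdf hΨq (by rw [er]; exact hmΨ)
    have c4 := (c2.bilin (ContinuousLinearMap.id ℂ (U →L[ℂ] E)) hΦ').weight
      (b := a) (by simp)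
    have c5 := (c3.bilin (ContinuousLinearMap.id ℂ (U →L[ℂ] E)) hD'').weight
      (b := a) (by simp)
    refine ⟨f0.comp_sub hs Φ0 Ψ0 D0 hm, _, fun i θ u hu => ?_, (c1.add c4).add c5⟩
    have der : ∀ {Φ Φ' : I → ℝ → U → U}, LB0 O (fun _ => 1) Φ →
        (∀ i θ, ∀ u ∈ O, HasDerivAt (fun τ => Φ i τ u) (Φ' i θ u) θ) →
        (∀ i θ, ∀ u ∈ O, Φ i θ u ∈ thickening (ρ - s) S) →
        HasDerivAt (fun τ => f i τ (Φ i τ u))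
          (f' i θ (Φ i θ u) + _root_.fderiv ℂ (f i θ) (Φ i θ u) (Φ' i θ u)) θ := by
      intro Φ Φ' Φ0 Φd hm
      obtain ⟨C, hC, hexp⟩ := LB0.expand fd hf'.zero
      obtain ⟨C', hC', hb'⟩ := hf'.zero.bdd
      obtain ⟨L, hL, hlip⟩ := Φ0.lip
      have hm' : ∀ τ, Φ i τ u ∈ thickening ρ S := fun τ => thick_mono hs (hm i τ u hu)
      refine hasDerivAt_comp_aux (S := S) (ρ := ρ) (f := f i) (f' := f' i)
        (Φ := fun τ => Φ i τ u) (C := C) (D := 2 * C' / s)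
        ((f0.diff i θ).differentiableAt (isOpen_thickening.mem_nhds (hm' θ))) ?_ ?_
        (Φd i θ u hu) hm' ⟨L, ?_⟩ (by positivity)
      · intro τ v hv
        simpa using hexp i θ τ v hv
      · intro x hx
        exact thick_lip hs (hf'.zero.diff i θ) (fun x hx => by simpa using hb' i θ x hx)
          (hm i θ u hu) hx
      · intro τ
        simpa using hlip i τ θ u hu
    have := (der Φ0 Φd hmΦ).sub (der Ψ0 Ψd hmΨ)
    refine HasDerivAt.congr_deriv this ?_
    simp only [ContinuousLinearMap.id_apply, map_sub, sub_apply]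
    abel

end Strob

namespace Strob

open Set Metric Filter Topology


universe u
variable {U E F G : Type u} [NormedAddCommGroup U] [NormedSpace ℂ U]
  [NormedAddCommGroup E] [NormedSpace ℂ E]
  [NormedAddCommGroup F] [NormedSpace ℂ F]
  [NormedAddCommGroup G] [NormedSpace ℂ G]
  {I : Type*}
variable {O O' : Set U} {a b : I → ℝ} {g h : I → ℝ → U → E}

/-- Operators close to the identity are invertible. -/
theorem inv_near [CompleteSpace E] {A : E →L[ℂ] E} (hA : ‖A - 1‖ ≤ 1/2) :
    IsUnit A ∧ ‖A.inverse‖ ≤ 2 := by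
  have h1 : ‖1 - A‖ < 1 := by rw [norm_sub_rev]; linarith
  have hu : IsUnit A := by
    have := isUnit_one_sub_of_norm_lt_one h1
    simpa using this
  refine ⟨hu, ?_⟩
  rw [← ContinuousLinearMap.ringInverse_eq_inverse]
  have e : Ring.inverse A = 1 + (1 - A) * Ring.inverse A := by
    rw [sub_mul, Ring.mul_inverse_cancel _ hu]; simp
  have h3 : ‖Ring.inverse A‖ ≤ 1 + 1/2 * ‖Ring.inverse A‖ := by
    calc ‖Ring.inverse A‖ = ‖1 + (1 - A) * Ring.inverse A‖ := by rw [← e]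
      _ ≤ ‖(1 : E →L[ℂ] E)‖ + ‖(1 - A) * Ring.inverse A‖ := norm_add_le _ _
      _ ≤ 1 + 1/2 * ‖Ring.inverse A‖ := by
        gcongr
        · exact ContinuousLinearMap.norm_id_le
        · refine (norm_mul_le _ _).trans ?_
          rw [norm_sub_rev] at hA
          gcongr
  linarith

theorem inverse_sub [CompleteSpace E] {A B : E →L[ℂ] E} (hA : IsUnit A) (hB : IsUnit B) :
    A.inverse - B.inverse = A.inverse * ((B - A) * B.inverse) := by
  rw [← ContinuousLinearMap.ringInverse_eq_inverse, sub_mul, mul_sub,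
    Ring.mul_inverse_cancel _ hB, ← mul_assoc, Ring.inverse_mul_cancel _ hA]
  simp

theorem hasFDerivAt_inverse [CompleteSpace E] {A : E →L[ℂ] E} (hA : IsUnit A) :
    HasFDerivAt (fun B : E →L[ℂ] E => B.inverse)
      (-ContinuousLinearMap.mulLeftRight ℂ (E →L[ℂ] E) A.inverse A.inverse) A := by
  obtain ⟨x, rfl⟩ := hA
  have := hasFDerivAt_ringInverse (𝕜 := ℂ) x
  rw [← ContinuousLinearMap.ringInverse_eq_inverse, Ring.inverse_unit]
  exact this

theorem LB0.inverse [CompleteSpace E] {A : I → ℝ → U → (E →L[ℂ] E)}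
    (hA : LB0 O (fun _ => 1) A) (hn : ∀ i θ, ∀ u ∈ O, ‖A i θ u - 1‖ ≤ 1/2) :
    LB0 O (fun _ => 1) (fun i θ u => (A i θ u).inverse) := by
  obtain ⟨D, hD, h2⟩ := hA.lip
  refine ⟨?_, fun _ => zero_le_one, ⟨2, by norm_num, ?_⟩, ⟨4 * D, by positivity, ?_⟩⟩
  · intro i θ u hu
    exact (hasFDerivAt_inverse (inv_near (hn i θ u hu)).1).differentiableAt.comp_differentiableWithinAt
      u (hA.diff i θ u hu)
  · intro i θ u hu
    simpa using (inv_near (hn i θ u hu)).2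
  · intro i θ θ' u hu
    obtain ⟨u1, b1⟩ := inv_near (hn i θ u hu)
    obtain ⟨u2, b2⟩ := inv_near (hn i θ' u hu)
    rw [inverse_sub u1 u2]
    have h3 := h2 i θ' θ u hu
    rw [abs_sub_comm] at h3
    calc _ ≤ ‖(A i θ u).inverse‖ * (‖A i θ' u - A i θ u‖ * ‖(A i θ' u).inverse‖) :=
          (norm_mul_le _ _).trans (by gcongr; exact norm_mul_le _ _)
      _ ≤ 2 * ((D * 1 * |θ - θ'|) * 2) := by gcongr
      _ = _ := by ring

theorem LB.inverse [CompleteSpace E] : ∀ {q : ℕ} {A : I → ℝ → U → (E →L[ℂ] E)}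
    (_ : LB q O (fun _ => 1) A) (_ : ∀ i θ, ∀ u ∈ O, ‖A i θ u - 1‖ ≤ 1/2),
    LB q O (fun _ => 1) (fun i θ u => (A i θ u).inverse)
  | 0, _, hA, hn => LB0.inverse hA hn
  | q+1, A, hA, hn => by
    have ih := LB.inverse hA.pred hn
    obtain ⟨h0, A', hd, hA'⟩ := hA
    have c := (((LB.bilin (ContinuousLinearMap.mul ℂ (E →L[ℂ] E)) (LB.bilin
      (ContinuousLinearMap.mul ℂ (E →L[ℂ] E)) ih hA') ih)).neg).weight
      (b := fun _ => 1) (fun _ => by simp)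
    refine ⟨h0.inverse hn, _, fun i θ u hu => ?_, c⟩
    have h1 := (hasFDerivAt_inverse (inv_near (hn i θ u hu)).1).restrictScalars ℝ
    have h2 := h1.comp_hasDerivAt θ (hd i θ u hu)
    exact h2

end Strob

namespace Strob

open Set Metric Filter Topology


universe u
variable {U E F G : Type u} [NormedAddCommGroup U] [NormedSpace ℂ U]
  [NormedAddCommGroup E] [NormedSpace ℂ E]
  [NormedAddCommGroup F] [NormedSpace ℂ F]
  [NormedAddCommGroup G] [NormedSpace ℂ G]
  {I : Type*}
variable {O O' : Set U} {a b : I → ℝ} {g h : I → ℝ → U → E}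

/-- Differentiation under the integral sign. -/
theorem LB0.hasFDerivAt_integral [CompleteSpace E] (hO : IsOpen O) (hg : LB0 O a g) (i : I)
    (s t : ℝ) {u : U} (hu : u ∈ O) :
    HasFDerivAt (fun v => ∫ θ in s..t, g i θ v) (∫ θ in s..t, _root_.fderiv ℂ (g i θ) u) u := by
  obtain ⟨r, hr, hrO⟩ := Metric.isOpen_iff.1 hO u hu
  have hf : LB0 (ball u (r/2)) a (fun i θ u => _root_.fderiv ℂ (g i θ) u) := by
    refine hg.fderiv hO (half_pos hr) (fun v hv => ?_)
    refine (ball_subset_ball' ?_).trans hrO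
    rw [mem_ball] at hv
    linarith
  obtain ⟨C, hC, hb⟩ := hf.bdd
  refine intervalIntegral.hasFDerivAt_integral_of_dominated_of_fderiv_le
    (𝕜 := ℂ) (F := fun v θ => g i θ v) (F' := fun v θ => _root_.fderiv ℂ (g i θ) v)
    (bound := fun _ => C * a i)
    (ball_mem_nhds u (half_pos hr)) ?_ ?_ ?_ ?_ ?_ ?_
  · filter_upwards [hO.mem_nhds hu] with v hv
    exact (hg.cont i hv).aestronglyMeasurable
  · exact (hg.cont i hu).intervalIntegrable _ _
  · exact (hf.cont i (mem_ball_self (half_pos hr))).aestronglyMeasurable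
  · exact Eventually.of_forall fun θ _ v hv => hb i θ v hv
  · exact continuous_const.intervalIntegrable _ _
  · refine Eventually.of_forall fun θ _ v hv => ?_
    have hv' : v ∈ O := hrO (ball_subset_ball (by linarith) hv)
    exact ((hg.diff i θ).differentiableAt (hO.mem_nhds hv')).hasFDerivAt

theorem LB0.avg [CompleteSpace E] {q : ℕ} (hO : IsOpen O) (hg : LB0 O a g) :
    LB q O a (fun i _ u => ∫ θ in (0:ℝ)..1, g i θ u) := by
  obtain ⟨C, hC, hb⟩ := hg.bdd
  refine LB.of_const hg.wnn (fun i u hu =>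
    (hg.hasFDerivAt_integral hO i 0 1 hu).differentiableAt.differentiableWithinAt)
    ⟨C, hC, fun i u hu => ?_⟩
  have := intervalIntegral.norm_integral_le_of_norm_le_const (a := (0:ℝ)) (b := 1)
    (fun θ _ => hb i θ u hu)
  simpa using this

theorem primitive_periodic {φ : ℝ → E} (hc : Continuous φ) (hp : Function.Periodic φ 1)
    (h0 : ∫ θ in (0:ℝ)..1, φ θ = 0) : Function.Periodic (fun θ => ∫ τ in (0:ℝ)..θ, φ τ) 1 := by
  intro θ
  have h1 : ∫ τ in θ..(θ + 1), φ τ = 0 := by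
    rw [hp.intervalIntegral_add_eq θ 0]; simpa using h0
  have h2 := intervalIntegral.integral_add_adjacent_intervals (μ := MeasureTheory.volume)
    (hc.intervalIntegrable 0 θ) (hc.intervalIntegrable θ (θ+1))
  simp only
  rw [← h2, h1, add_zero]

theorem primitive_bound {φ : ℝ → E} {B : ℝ} (hc : Continuous φ) (hp : Function.Periodic φ 1)
    (h0 : ∫ θ in (0:ℝ)..1, φ θ = 0) (hB : 0 ≤ B) (hb : ∀ θ, ‖φ θ‖ ≤ B) (θ : ℝ) :
    ‖∫ τ in (0:ℝ)..θ, φ τ‖ ≤ B := by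
  have hP := primitive_periodic hc hp h0
  have h1 := hP.sub_zsmul_eq (x := θ) ⌊θ⌋
  simp only [zsmul_eq_mul, mul_one] at h1
  rw [← h1]
  have h2 := intervalIntegral.norm_integral_le_of_norm_le_const (a := (0:ℝ)) (b := θ - ⌊θ⌋)
    (fun τ _ => hb τ)
  refine h2.trans ?_
  have h3 : |θ - ⌊θ⌋ - 0| ≤ 1 := by
    rw [sub_zero, Int.self_sub_floor, abs_of_nonneg (Int.fract_nonneg θ)]
    exact (Int.fract_lt_one θ).le
  calc B * |θ - ⌊θ⌋ - 0| ≤ B * 1 := by gcongr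
    _ = B := mul_one B

theorem LB0.primitive [CompleteSpace E] (hO : IsOpen O) (hg : LB0 O a g)
    (hp : ∀ i, ∀ u ∈ O, Function.Periodic (fun θ => g i θ u) 1)
    (h0 : ∀ i, ∀ u ∈ O, ∫ θ in (0:ℝ)..1, g i θ u = 0) :
    LB0 O a (fun i θ u => ∫ τ in (0:ℝ)..θ, g i τ u) := by
  obtain ⟨C, hC, hb⟩ := hg.bdd
  refine ⟨fun i θ u hu =>
    (hg.hasFDerivAt_integral hO i 0 θ hu).differentiableAt.differentiableWithinAt,
    hg.wnn, ⟨C, hC, ?_⟩, ⟨C, hC, ?_⟩⟩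
  · intro i θ u hu
    exact primitive_bound (hg.cont i hu) (hp i u hu) (h0 i u hu)
      (mul_nonneg hC (hg.wnn i)) (fun θ => hb i θ u hu) θ
  · intro i θ θ' u hu
    rw [intervalIntegral.integral_interval_sub_left
      ((hg.cont i hu).intervalIntegrable _ _) ((hg.cont i hu).intervalIntegrable _ _)]
    exact intervalIntegral.norm_integral_le_of_norm_le_const (fun τ _ => hb i τ u hu)

theorem LB.primitive [CompleteSpace E] (hO : IsOpen O) {q : ℕ} (hg : LB q O a g)
    (hp : ∀ i, ∀ u ∈ O, Function.Periodic (fun θ => g i θ u) 1)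
    (h0 : ∀ i, ∀ u ∈ O, ∫ θ in (0:ℝ)..1, g i θ u = 0) :
    LB q O a (fun i θ u => ∫ τ in (0:ℝ)..θ, g i τ u) := by
  cases q with
  | zero => exact LB0.primitive hO hg hp h0
  | succ q =>
    refine ⟨hg.zero.primitive hO hp h0, g, fun i θ u hu => ?_, hg.pred⟩
    exact (hg.zero.cont i hu).integral_hasStrictDerivAt 0 θ |>.hasDerivAt

/-- Iterated derivatives in the space variable. -/
theorem LB.iterFDeriv [CompleteSpace E] {S : Set U} {q : ℕ} : ∀ (ξ : ℕ) {ρ s : ℝ} (_ : 0 < s)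
    (_ : LB q (thickening ρ S) a g),
    LB q (thickening (ρ - s) S) a (fun i θ u => iteratedFDeriv ℂ ξ (g i θ) u)
  | 0, ρ, s, hs, hg => by
    have h1 := (hg.mono (thick_mono hs)).clm
      ((continuousMultilinearCurryFin0 ℂ U E).symm.toContinuousLinearEquiv :
        E →L[ℂ] ContinuousMultilinearMap ℂ (fun _ : Fin 0 => U) E)
    refine h1.congr fun i θ u _ => ?_
    rw [iteratedFDeriv_zero_eq_comp]; rfl
  | ξ+1, ρ, s, hs, hg => by
    have ih := LB.iterFDeriv ξ (half_pos hs) hg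
    have h1 : LB q (thickening (ρ - s) S) a
        (fun i θ u => _root_.fderiv ℂ (iteratedFDeriv ℂ ξ (g i θ)) u) := by
      refine ih.fderiv isOpen_thickening (half_pos hs) (fun u hu => ?_)
      apply ball_sub_thick
      rwa [show ρ - s/2 - s/2 = ρ - s by ring]
    have h2 := h1.clm
      ((continuousMultilinearCurryLeftEquiv ℂ (fun _ : Fin (ξ+1) => U) E).symm.toContinuousLinearEquiv :
        (U →L[ℂ] ContinuousMultilinearMap ℂ (fun _ : Fin ξ => U) E) →L[ℂ]
          ContinuousMultilinearMap ℂ (fun _ : Fin (ξ+1) => U) E)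
    refine h2.congr fun i θ u _ => ?_
    rw [iteratedFDeriv_succ_eq_comp_left]; rfl

theorem LB.iterDeriv : ∀ {q : ℕ} {g : I → ℝ → U → E} (_ : LB q O a g) (ν : ℕ) (_ : ν ≤ q + 1),
    ∃ C, 0 ≤ C ∧ ∀ i θ, ∀ u ∈ O, ‖iteratedDeriv ν (fun τ => g i τ u) θ‖ ≤ C * a i
  | q, g, hg, 0, _ => by simpa using hg.zero.bdd
  | 0, g, hg, ν+1, hν => by
    obtain rfl : ν = 0 := by omega
    obtain ⟨D, hD, h2⟩ := hg.zero.lip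
    refine ⟨D, hD, fun i θ u hu => ?_⟩
    rw [zero_add, iteratedDeriv_one]
    exact norm_deriv_le_of_lip' (mul_nonneg hD (hg.zero.wnn i))
      (Eventually.of_forall fun τ => h2 i τ θ u hu)
  | q+1, g, hg, ν+1, hν => by
    obtain ⟨h0, g', hd, hg'⟩ := hg
    obtain ⟨C, hC, hb⟩ := hg'.iterDeriv ν (by omega)
    refine ⟨C, hC, fun i θ u hu => ?_⟩
    rw [iteratedDeriv_succ']
    have : deriv (fun τ => g i τ u) = fun τ => g' i τ u := by
      ext τ; exact (hd i τ u hu).deriv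
    rw [this]
    exact hb i θ u hu

theorem iteratedDeriv_scale {V : Type*} [NormedAddCommGroup V] [NormedSpace ℝ V] (φ : ℝ → V)
    (c : ℝ) (ν : ℕ) :
    iteratedDeriv ν (fun s => φ (c * s)) = fun t => c^ν • iteratedDeriv ν φ (c * t) := by
  induction ν with
  | zero => simp
  | succ ν ih =>
    rw [iteratedDeriv_succ, ih]
    ext t
    have h1 := deriv_comp_mul_left c (iteratedDeriv ν φ) t
    have h2 := deriv_const_smul_field (c^ν) (f := fun t => iteratedDeriv ν φ (c * t)) (x := t)
    simp only [Pi.smul_def] at h2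
    rw [h2, h1, iteratedDeriv_succ, smul_smul, pow_succ]

end Strob

namespace Strob

open Set Metric Filter Topology


universe u
variable {E : Type u} [NormedAddCommGroup E] [NormedSpace ℂ E]
  {I : Type*}

theorem thick_near {S : Set E} {ρ s : ℝ} {x y : E} (hx : x ∈ thickening (ρ - s) S)
    (hxy : ‖y - x‖ ≤ s) : y ∈ thickening ρ S := by
  rw [mem_thickening_iff] at hx ⊢
  obtain ⟨z, hz, hxz⟩ := hx
  refine ⟨z, hz, ?_⟩
  have := dist_triangle y x z
  rw [dist_eq_norm y x] at this
  linarith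

/-- Shrinking domains. -/
def Tset (S : Set E) (ρ r : ℝ) (k : ℕ) : Set E := thickening (ρ - k * r) S

theorem Tset_open (S : Set E) (ρ r : ℝ) (k : ℕ) : IsOpen (Tset S ρ r k) := isOpen_thickening

theorem Tset_ball {S : Set E} {ρ r : ℝ} {k : ℕ} : ∀ u ∈ Tset S ρ r (k+1),
    ball u r ⊆ Tset S ρ r k := by
  intro u hu
  apply ball_sub_thick
  have : ρ - k * r - r = ρ - ((k+1 : ℕ) : ℝ) * r := by push_cast; ring
  rw [this]; exact hu

theorem Tset_sub {S : Set E} {ρ r : ℝ} (hr : 0 < r) {k : ℕ} :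
    Tset S ρ r (k+1) ⊆ Tset S ρ r k := fun u hu => Tset_ball u hu (mem_ball_self hr)

/-- The increment field `h_k`. -/
noncomputable def hF (f : ℝ → E → E) (ε : ℝ) (k : ℕ) (θ : ℝ) (u : E) : E :=
  f θ (PhiIter f ε k θ u) - fderiv ℂ (PhiIter f ε k θ) u (aveField f (PhiIter f ε k) u)

theorem PhiIter_succ (f : ℝ → E → E) (ε : ℝ) (k : ℕ) (θ : ℝ) (u : E) :
    PhiIter f ε (k+1) θ u = u + ε • ∫ τ in (0:ℝ)..θ, hF f ε k τ u := rfl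

/-- The inductive hypothesis on the iterates. -/
structure Good (q : ℕ) (S : Set E) (ρ r : ℝ) (f : ℝ → E → E) (ε : I → ℝ) (k : ℕ) : Prop where
  lb : LB q (Tset S ρ r k) (fun _ : I => (1:ℝ)) (fun i θ u => PhiIter f (ε i) k θ u)
  near : ∀ i θ, ∀ u ∈ Tset S ρ r k, ‖PhiIter f (ε i) k θ u - u‖ ≤ r/2
  per : ∀ i, ∀ u ∈ Tset S ρ r k, Function.Periodic (fun θ => PhiIter f (ε i) k θ u) 1

/-- Consequences. -/
structure Step (q : ℕ) (S : Set E) (ρ r M : ℝ) (f : ℝ → E → E) (ε : I → ℝ) (k : ℕ) : Prop where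
  dΦ : LB q (Tset S ρ r (k+1)) (fun _ : I => (1:ℝ))
    (fun i θ u => fderiv ℂ (PhiIter f (ε i) k θ) u)
  dΦn : ∀ i θ, ∀ u ∈ Tset S ρ r (k+1), ‖fderiv ℂ (PhiIter f (ε i) k θ) u - 1‖ ≤ 1/2
  fΦ : LB q (Tset S ρ r (k+1)) (fun _ : I => (1:ℝ)) (fun i θ u => f θ (PhiIter f (ε i) k θ u))
  An : ∀ i, ∀ u ∈ Tset S ρ r (k+1), ‖fderiv ℂ (thAvg (PhiIter f (ε i) k)) u - 1‖ ≤ 1/2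
  Aeq : ∀ i, ∀ u ∈ Tset S ρ r (k+1), fderiv ℂ (thAvg (PhiIter f (ε i) k)) u =
    ∫ θ in (0:ℝ)..1, fderiv ℂ (PhiIter f (ε i) k θ) u
  Ainv : LB q (Tset S ρ r (k+1)) (fun _ : I => (1:ℝ))
    (fun i _ u => (fderiv ℂ (thAvg (PhiIter f (ε i) k)) u).inverse)
  b : LB q (Tset S ρ r (k+1)) (fun _ : I => (1:ℝ))
    (fun i _ u => thAvg (fun θ v => f θ (PhiIter f (ε i) k θ v)) u)
  F : LB q (Tset S ρ r (k+1)) (fun _ : I => (1:ℝ))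
    (fun i _ u => aveField f (PhiIter f (ε i) k) u)
  h : LB q (Tset S ρ r (k+1)) (fun _ : I => (1:ℝ)) (fun i θ u => hF f (ε i) k θ u)
  hb : ∀ i θ, ∀ u ∈ Tset S ρ r (k+1), ‖hF f (ε i) k θ u‖ ≤ 4 * M
  hper : ∀ i, ∀ u ∈ Tset S ρ r (k+1), Function.Periodic (fun θ => hF f (ε i) k θ u) 1
  hmean : ∀ i, ∀ u ∈ Tset S ρ r (k+1), ∫ θ in (0:ℝ)..1, hF f (ε i) k θ u = 0

theorem LB.app {O : Set E} {a b : I → ℝ} {q : ℕ} {A : I → ℝ → E → (E →L[ℂ] E)}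
    {x : I → ℝ → E → E} (hA : LB q O a A) (hx : LB q O b x) :
    LB q O (fun i => a i * b i) (fun i θ u => A i θ u (x i θ u)) :=
  LB.bilin (ContinuousLinearMap.id ℂ (E →L[ℂ] E)) hA hx

theorem LB.app1 {O : Set E} {q : ℕ} {A : I → ℝ → E → (E →L[ℂ] E)}
    {x : I → ℝ → E → E} (hA : LB q O (fun _ => 1) A) (hx : LB q O (fun _ => 1) x) :
    LB q O (fun _ => 1) (fun i θ u => A i θ u (x i θ u)) :=
  (hA.app hx).weight (fun _ => by simp)

theorem Tset_map {S : Set E} {ρ r : ℝ} (hr : 0 < r) {k : ℕ} {u v : E}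
    (hu : u ∈ Tset S ρ r (k+1)) (huv : ‖v - u‖ ≤ r/2) : v ∈ thickening (ρ - r/2) S := by
  apply thick_near (s := r/2) _ huv
  refine thickening_mono ?_ S hu
  push_cast
  have : 0 ≤ (k:ℝ) * r := by positivity
  linarith

theorem fderiv_near [CompleteSpace E] {S : Set E} {ρ r : ℝ} (hr : 0 < r) {k : ℕ} {φ : E → E}
    (hd : DifferentiableOn ℂ φ (Tset S ρ r k)) (hn : ∀ u ∈ Tset S ρ r k, ‖φ u - u‖ ≤ r/2)
    {u : E} (hu : u ∈ Tset S ρ r (k+1)) : ‖fderiv ℂ φ u - 1‖ ≤ 1/2 := by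
  have hb := Tset_ball u hu
  have h1 := cauchy_fderiv (g := fun v => φ v - v) hr
    ((hd.mono hb).sub differentiableOn_id) (fun z hz => hn z (hb hz))
  have h2 : fderiv ℂ (fun v => φ v - v) u = fderiv ℂ φ u - 1 := by
    have hdu : DifferentiableAt ℂ φ u :=
      hd.differentiableAt ((Tset_open S ρ r k).mem_nhds (Tset_sub hr hu))
    exact (hdu.hasFDerivAt.sub (hasFDerivAt_id u)).fderiv
  rw [h2] at h1
  calc _ ≤ r/2/r := h1
    _ = 1/2 := by field_simp

theorem Good.step [CompleteSpace E] {q : ℕ} {S : Set E} {ρ r M : ℝ} {f : ℝ → E → E} {ε : I → ℝ}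
    (hr : 0 < r) (hM : 0 < M)
    (hf : LB q (thickening ρ S) (fun _ : I => (1:ℝ)) (fun _ => f))
    (hfM : ∀ θ, ∀ u ∈ thickening ρ S, ‖f θ u‖ ≤ M)
    (hfp : ∀ u, Function.Periodic (fun θ => f θ u) 1) {k : ℕ}
    (hk : Good q S ρ r f ε k) : Step q S ρ r M f ε k := by
  have hO := Tset_open S ρ r k
  have hO1 := Tset_open S ρ r (k+1)
  have hsub := Tset_sub (S := S) (ρ := ρ) hr (k := k)
  have dΦ : LB q (Tset S ρ r (k+1)) (fun _ : I => (1:ℝ))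
    (fun i θ u => fderiv ℂ (PhiIter f (ε i) k θ) u) := hk.lb.fderiv hO hr Tset_ball
  have dΦn : ∀ i θ, ∀ u ∈ Tset S ρ r (k+1), ‖fderiv ℂ (PhiIter f (ε i) k θ) u - 1‖ ≤ 1/2 :=
    fun i θ u hu => fderiv_near hr (hk.lb.zero.diff i θ) (hk.near i θ) hu
  have hmap : ∀ i θ, ∀ u ∈ Tset S ρ r (k+1), PhiIter f (ε i) k θ u ∈ thickening (ρ - r/2) S :=
    fun i θ u hu => Tset_map hr hu (hk.near i θ u (hsub hu))
  have fΦ : LB q (Tset S ρ r (k+1)) (fun _ : I => (1:ℝ))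
      (fun i θ u => f θ (PhiIter f (ε i) k θ u)) :=
    LB.comp (half_pos hr) hf (hk.lb.mono hsub) hmap
  have Alb : LB q (Tset S ρ r k) (fun _ : I => (1:ℝ))
      (fun i _ u => thAvg (PhiIter f (ε i) k) u) := LB0.avg hO hk.lb.zero
  have Anear : ∀ i, ∀ u ∈ Tset S ρ r k, ‖thAvg (PhiIter f (ε i) k) u - u‖ ≤ r/2 := by
    intro i u hu
    have e : thAvg (PhiIter f (ε i) k) u - u
        = ∫ θ in (0:ℝ)..1, (PhiIter f (ε i) k θ u - u) := by
      rw [intervalIntegral.integral_sub ((hk.lb.zero.cont i hu).intervalIntegrable _ _)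
        (continuous_const.intervalIntegrable _ _)]
      simp [thAvg]
    rw [e]
    have := intervalIntegral.norm_integral_le_of_norm_le_const (a := (0:ℝ)) (b := 1)
      (fun θ _ => hk.near i θ u hu)
    simpa using this
  have An : ∀ i, ∀ u ∈ Tset S ρ r (k+1), ‖fderiv ℂ (thAvg (PhiIter f (ε i) k)) u - 1‖ ≤ 1/2 :=
    fun i u hu => fderiv_near hr (Alb.zero.diff i 0) (Anear i) hu
  have Aeq : ∀ i, ∀ u ∈ Tset S ρ r (k+1), fderiv ℂ (thAvg (PhiIter f (ε i) k)) u =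
      ∫ θ in (0:ℝ)..1, fderiv ℂ (PhiIter f (ε i) k θ) u := fun i u hu =>
    (hk.lb.zero.hasFDerivAt_integral hO i 0 1 (hsub hu)).fderiv
  have Ainv : LB q (Tset S ρ r (k+1)) (fun _ : I => (1:ℝ))
      (fun i _ u => (fderiv ℂ (thAvg (PhiIter f (ε i) k)) u).inverse) :=
    LB.inverse (Alb.fderiv hO hr Tset_ball) (fun i _ u hu => An i u hu)
  have b : LB q (Tset S ρ r (k+1)) (fun _ : I => (1:ℝ))
    (fun i _ u => thAvg (fun θ v => f θ (PhiIter f (ε i) k θ v)) u) := LB0.avg hO1 fΦ.zero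
  have F : LB q (Tset S ρ r (k+1)) (fun _ : I => (1:ℝ))
    (fun i _ u => aveField f (PhiIter f (ε i) k) u) := Ainv.app1 b
  have h : LB q (Tset S ρ r (k+1)) (fun _ : I => (1:ℝ)) (fun i θ u => hF f (ε i) k θ u) :=
    fΦ.sub (dΦ.app1 F)
  have fb : ∀ i θ, ∀ u ∈ Tset S ρ r (k+1), ‖f θ (PhiIter f (ε i) k θ u)‖ ≤ M :=
    fun i θ u hu => hfM θ _ (thick_mono (half_pos hr) (hmap i θ u hu))
  have bb : ∀ i, ∀ u ∈ Tset S ρ r (k+1),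
      ‖thAvg (fun θ v => f θ (PhiIter f (ε i) k θ v)) u‖ ≤ M := by
    intro i u hu
    have := intervalIntegral.norm_integral_le_of_norm_le_const (a := (0:ℝ)) (b := 1)
      (fun θ _ => fb i θ u hu)
    simpa [thAvg] using this
  refine ⟨dΦ, dΦn, fΦ, An, Aeq, Ainv, b, F, h, ?_, ?_, ?_⟩
  · intro i θ u hu
    have h1 : ‖aveField f (PhiIter f (ε i) k) u‖ ≤ 2 * M := by
      refine (ContinuousLinearMap.le_opNorm _ _).trans ?_
      have := (inv_near (An i u hu)).2
      have := bb i u hu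
      gcongr
    have h2 : ‖fderiv ℂ (PhiIter f (ε i) k θ) u‖ ≤ 3/2 := by
      have h3 := dΦn i θ u hu
      have h4 : ‖(1 : E →L[ℂ] E)‖ ≤ 1 := ContinuousLinearMap.norm_id_le
      have h5 := norm_add_le (fderiv ℂ (PhiIter f (ε i) k θ) u - 1) 1
      rw [sub_add_cancel] at h5
      linarith
    have h3 : ‖fderiv ℂ (PhiIter f (ε i) k θ) u (aveField f (PhiIter f (ε i) k) u)‖
        ≤ 3/2 * (2 * M) := by
      refine (ContinuousLinearMap.le_opNorm _ _).trans ?_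
      gcongr
    have h4 := norm_sub_le (f θ (PhiIter f (ε i) k θ u))
      (fderiv ℂ (PhiIter f (ε i) k θ) u (aveField f (PhiIter f (ε i) k) u))
    have h5 := fb i θ u hu
    unfold hF
    linarith
  · intro i u hu θ
    have h1 : PhiIter f (ε i) k (θ+1) u = PhiIter f (ε i) k θ u := hk.per i u (hsub hu) θ
    have h2 : fderiv ℂ (PhiIter f (ε i) k (θ+1)) u = fderiv ℂ (PhiIter f (ε i) k θ) u := by
      apply Filter.EventuallyEq.fderiv_eq
      filter_upwards [hO.mem_nhds (hsub hu)] with v hv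
      exact hk.per i v hv θ
    have h3 := hfp (PhiIter f (ε i) k θ u) θ
    simp only [hF] at h3 ⊢
    rw [h1, h2, h3]
  · intro i u hu
    have hu' := (inv_near (An i u hu)).1
    have c1 := (fΦ.zero.cont i hu).intervalIntegrable (μ := MeasureTheory.volume) 0 1
    have c2 := (dΦ.zero.cont i hu).intervalIntegrable (μ := MeasureTheory.volume) 0 1
    have c3 := ((dΦ.app1 F).zero.cont i hu).intervalIntegrable (μ := MeasureTheory.volume) 0 1
    have e1 : ∫ θ in (0:ℝ)..1, hF f (ε i) k θ u =
        (∫ θ in (0:ℝ)..1, f θ (PhiIter f (ε i) k θ u)) - ∫ θ in (0:ℝ)..1,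
          fderiv ℂ (PhiIter f (ε i) k θ) u (aveField f (PhiIter f (ε i) k) u) :=
      intervalIntegral.integral_sub c1 c3
    rw [e1, ← ContinuousLinearMap.intervalIntegral_apply c2, ← Aeq i u hu, sub_eq_zero]
    have e2 : fderiv ℂ (thAvg (PhiIter f (ε i) k)) u *
        (fderiv ℂ (thAvg (PhiIter f (ε i) k)) u).inverse = 1 := by
      rw [← ContinuousLinearMap.ringInverse_eq_inverse, Ring.mul_inverse_cancel _ hu']
    have e3 := congrArg (fun B : E →L[ℂ] E => B (thAvg (fun θ v => f θ (PhiIter f (ε i) k θ v)) u)) e2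
    exact e3.symm

end Strob

namespace Strob

open Set Metric Filter Topology


universe u
variable {E : Type u} [NormedAddCommGroup E] [NormedSpace ℂ E]
  {I : Type*}

theorem Good.zero {q : ℕ} {S : Set E} {ρ r : ℝ} {f : ℝ → E → E} {ε : I → ℝ}
    (hr : 0 < r) (hS : ∃ B, 0 ≤ B ∧ ∀ x ∈ thickening ρ S, ‖x‖ ≤ B) : Good q S ρ r f ε 0 := by
  obtain ⟨B, hB, hb⟩ := hS
  refine ⟨?_, ?_, ?_⟩
  · refine LB.of_const (fun _ => zero_le_one) (g := fun _ u => u) (fun _ => differentiableOn_id)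
      ⟨B, hB, fun i u hu => ?_⟩
    have : u ∈ thickening ρ S := by simpa [Tset] using hu
    simpa using hb u this
  · intro i θ u hu
    simp only [PhiIter, sub_self, norm_zero]; positivity
  · intro i u hu θ
    simp [PhiIter]

theorem Step.hasDerivAt [CompleteSpace E] {q : ℕ} {S : Set E} {ρ r M : ℝ} {f : ℝ → E → E}
    {ε : I → ℝ} {k : ℕ} (hs : Step q S ρ r M f ε k) (i : I) (θ : ℝ) {u : E}
    (hu : u ∈ Tset S ρ r (k+1)) :
    HasDerivAt (fun τ => PhiIter f (ε i) (k+1) τ u) (ε i • hF f (ε i) k θ u) θ := by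
  have h1 := ((hs.h.zero.cont i hu).integral_hasStrictDerivAt 0 θ).hasDerivAt
  exact (h1.const_smul (ε i)).const_add u

theorem Step.next [CompleteSpace E] {q : ℕ} {S : Set E} {ρ r M : ℝ} {f : ℝ → E → E} {ε : I → ℝ}
    (hr : 0 < r) (hM : 0 < M) (hε : ∀ i, 0 < ε i) (hεM : ∀ i, 8 * M * ε i ≤ r)
    {k : ℕ} (hk : Good q S ρ r f ε k) (hs : Step q S ρ r M f ε k)
    (h0 : Good q S ρ r f ε 0) : Good q S ρ r f ε (k+1) := by
  have hO1 := Tset_open S ρ r (k+1)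
  have hsub0 : Tset S ρ r (k+1) ⊆ Tset S ρ r 0 := by
    refine thickening_mono ?_ S
    push_cast
    have : 0 ≤ (k:ℝ) * r := by positivity
    linarith
  have P := hs.h.primitive hO1 hs.hper hs.hmean
  obtain ⟨L, hL⟩ : ∃ L, ∀ i, ε i ≤ L := ⟨r / (8 * M), fun i => by
    rw [le_div_iff₀ (by positivity)]; linarith [hεM i]⟩
  have eps : LB q (Tset S ρ r (k+1)) (fun _ : I => (1:ℝ))
      (fun i θ u => ((ε i : ℂ)) • ∫ τ in (0:ℝ)..θ, hF f (ε i) k τ u) := by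
    have h1 : LB q (Tset S ρ r (k+1)) (fun _ : I => (1:ℝ))
        (fun i _ _ => (ε i : ℂ) • ContinuousLinearMap.id ℂ E) := by
      refine LB.of_const (g := fun i _ => (ε i : ℂ) • ContinuousLinearMap.id ℂ E)
        (fun _ => zero_le_one) (fun _ => differentiableOn_const _)
        ⟨r / (8 * M), by positivity, fun i u _ => ?_⟩
      rw [norm_smul, Complex.norm_real, Real.norm_of_nonneg (hε i).le]
      have h4 : ‖ContinuousLinearMap.id ℂ E‖ ≤ 1 := ContinuousLinearMap.norm_id_le
      have : ε i ≤ r / (8 * M) := by rw [le_div_iff₀ (by positivity)]; linarith [hεM i]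
      have := (hε i).le
      gcongr
    exact h1.app1 P
  refine ⟨?_, ?_, ?_⟩
  · refine ((h0.lb.mono hsub0).add eps).congr fun i θ u hu => ?_
    rw [PhiIter_succ, Complex.coe_smul]; rfl
  · intro i θ u hu
    rw [PhiIter_succ, add_sub_cancel_left, norm_smul, Real.norm_of_nonneg (hε i).le]
    have := primitive_bound (hs.h.zero.cont i hu) (hs.hper i u hu) (hs.hmean i u hu)
      (by positivity : 0 ≤ 4 * M) (fun θ => hs.hb i θ u hu) θ
    calc _ ≤ ε i * (4 * M) := by gcongr; exact (hε i).le
      _ ≤ r/2 := by linarith [hεM i]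
  · intro i u hu θ
    have := primitive_periodic (hs.h.zero.cont i hu) (hs.hper i u hu) (hs.hmean i u hu) θ
    simp only [PhiIter_succ] at this ⊢
    rw [this]

theorem Step.diff_base [CompleteSpace E] {q : ℕ} {S : Set E} {ρ r M : ℝ} {f : ℝ → E → E}
    {ε : I → ℝ} (hε : ∀ i, 0 < ε i) (hs : Step q S ρ r M f ε 0) :
    LB q (Tset S ρ r 1) (fun i => ε i ^ 1)
      (fun i θ u => PhiIter f (ε i) 1 θ u - PhiIter f (ε i) 0 θ u) := by
  have P := (hs.h.primitive (Tset_open S ρ r 1) hs.hper hs.hmean).rsmul (fun i => (hε i).le)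
  refine (P.weight (b := fun i => ε i ^ 1) (fun i => by simp)).congr fun i θ u hu => ?_
  rw [PhiIter_succ]
  simp [PhiIter]

/-- Propagation of the difference estimate to the increment field. -/
theorem diff_h [CompleteSpace E] {q : ℕ} {S : Set E} {ρ r M : ℝ} {f : ℝ → E → E}
    {ε : I → ℝ} {a : I → ℝ} {k : ℕ} (hr : 0 < r)
    (hf : LB q (thickening ρ S) (fun _ : I => (1:ℝ)) (fun _ => f))
    (g0 : Good q S ρ r f ε k) (g1 : Good q S ρ r f ε (k+1))
    (s0 : Step q S ρ r M f ε k) (s1 : Step q S ρ r M f ε (k+1))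
    (hD : LB q (Tset S ρ r (k+1)) a
      (fun i θ u => PhiIter f (ε i) (k+1) θ u - PhiIter f (ε i) k θ u)) :
    LB q (Tset S ρ r (k+2)) a (fun i θ u => hF f (ε i) (k+1) θ u - hF f (ε i) k θ u) := by
  have hO := Tset_open S ρ r k
  have hO1 := Tset_open S ρ r (k+1)
  have hO2 := Tset_open S ρ r (k+2)
  have sub1 := Tset_sub (S := S) (ρ := ρ) hr (k := k)
  have sub2 : Tset S ρ r (k+2) ⊆ Tset S ρ r (k+1) := Tset_sub (S := S) (ρ := ρ) hr (k := k+1)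
  -- difference of the compositions
  have df : LB q (Tset S ρ r (k+2)) a
      (fun i θ u => f θ (PhiIter f (ε i) (k+1) θ u) - f θ (PhiIter f (ε i) k θ u)) := by
    refine LB.comp_sub (half_pos hr) hf (g1.lb.mono sub2) (g0.lb.mono (sub2.trans sub1))
      (hD.mono sub2) ?_
    intro t ht i θ u hu
    refine Tset_map (k := k+1) hr hu ?_
    have e : PhiIter f (ε i) k θ u + t • (PhiIter f (ε i) (k+1) θ u - PhiIter f (ε i) k θ u) - u
        = (1 - t) • (PhiIter f (ε i) k θ u - u) + t • (PhiIter f (ε i) (k+1) θ u - u) := by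
      module
    have n0 := g0.near i θ u (sub1 (sub2 hu))
    have n1 := g1.near i θ u (sub2 hu)
    have t1 : 0 ≤ 1 - t := by linarith [ht.2]
    rw [e]
    calc _ ≤ (1 - t) * ‖PhiIter f (ε i) k θ u - u‖ + t * ‖PhiIter f (ε i) (k+1) θ u - u‖ := by
          refine (norm_add_le _ _).trans ?_
          rw [norm_smul, norm_smul, Real.norm_of_nonneg t1, Real.norm_of_nonneg ht.1]
      _ ≤ (1 - t) * (r/2) + t * (r/2) := by
          have := ht.1
          gcongr
      _ = r/2 := by ring
  -- difference of the derivatives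
  have dd : LB q (Tset S ρ r (k+2)) a
      (fun i θ u => fderiv ℂ (PhiIter f (ε i) (k+1) θ) u - fderiv ℂ (PhiIter f (ε i) k θ) u) := by
    refine (hD.fderiv hO1 hr (Tset_ball (k := k+1))).congr fun i θ u hu => ?_
    have d1 := (g1.lb.zero.diff i θ).differentiableAt (hO1.mem_nhds (sub2 hu))
    have d0 := (g0.lb.zero.diff i θ).differentiableAt (hO.mem_nhds (sub1 (sub2 hu)))
    exact (d1.hasFDerivAt.sub d0.hasFDerivAt).fderiv
  have dA : LB q (Tset S ρ r (k+2)) a (fun i _ u => fderiv ℂ (thAvg (PhiIter f (ε i) (k+1))) u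
      - fderiv ℂ (thAvg (PhiIter f (ε i) k)) u) := by
    refine (LB0.avg hO2 dd.zero).congr fun i θ u hu => ?_
    rw [s1.Aeq i u hu, s0.Aeq i u (sub2 hu)]
    exact intervalIntegral.integral_sub ((s1.dΦ.zero.cont i hu).intervalIntegrable _ _)
      ((s0.dΦ.zero.cont i (sub2 hu)).intervalIntegrable _ _)
  have db : LB q (Tset S ρ r (k+2)) a
      (fun i _ u => thAvg (fun θ v => f θ (PhiIter f (ε i) (k+1) θ v)) u
        - thAvg (fun θ v => f θ (PhiIter f (ε i) k θ v)) u) := by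
    refine (LB0.avg hO2 df.zero).congr fun i θ u hu => ?_
    exact intervalIntegral.integral_sub ((s1.fΦ.zero.cont i hu).intervalIntegrable _ _)
      ((s0.fΦ.zero.cont i (sub2 hu)).intervalIntegrable _ _)
  have dF : LB q (Tset S ρ r (k+2)) a (fun i _ u => aveField f (PhiIter f (ε i) (k+1)) u
      - aveField f (PhiIter f (ε i) k) u) := by
    have h1 := (dA.app (s0.F.mono sub2)).weight (b := a) (fun i => by simp)
    have h2 := (s1.Ainv.app (db.sub h1)).weight (b := a) (fun i => by simp)
    refine h2.congr fun i θ u hu => ?_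
    have e1 : (fderiv ℂ (thAvg (PhiIter f (ε i) (k+1))) u).inverse *
        fderiv ℂ (thAvg (PhiIter f (ε i) (k+1))) u = 1 := by
      rw [← ContinuousLinearMap.ringInverse_eq_inverse,
        Ring.inverse_mul_cancel _ (inv_near (s1.An i u hu)).1]
    have e0 : fderiv ℂ (thAvg (PhiIter f (ε i) k)) u *
        (fderiv ℂ (thAvg (PhiIter f (ε i) k)) u).inverse = 1 := by
      rw [← ContinuousLinearMap.ringInverse_eq_inverse,
        Ring.mul_inverse_cancel _ (inv_near (s0.An i u (sub2 hu))).1]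
    have e1' : ∀ x, (fderiv ℂ (thAvg (PhiIter f (ε i) (k+1))) u).inverse
        (fderiv ℂ (thAvg (PhiIter f (ε i) (k+1))) u x) = x := fun x =>
      congrArg (fun B : E →L[ℂ] E => B x) e1
    have e0' : ∀ x, fderiv ℂ (thAvg (PhiIter f (ε i) k)) u
        ((fderiv ℂ (thAvg (PhiIter f (ε i) k)) u).inverse x) = x := fun x =>
      congrArg (fun B : E →L[ℂ] E => B x) e0
    simp only [aveField, sub_apply, map_sub, e1', e0']
    abel
  have h3 := (dd.app s1.F).weight (b := a) (fun i => by simp)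
  have h4 := ((s0.dΦ.mono sub2).app dF).weight (b := a) (fun i => by simp)
  refine (df.sub (h3.add h4)).congr fun i θ u hu => ?_
  simp only [hF, sub_apply, map_sub]
  abel

theorem diff_succ [CompleteSpace E] {q : ℕ} {S : Set E} {ρ r M : ℝ} {f : ℝ → E → E}
    {ε : I → ℝ} {k : ℕ} (hr : 0 < r) (hε : ∀ i, 0 < ε i)
    (s0 : Step q S ρ r M f ε k) (s1 : Step q S ρ r M f ε (k+1))
    (hD : LB q (Tset S ρ r (k+2)) (fun i => ε i ^ (k+1))
      (fun i θ u => hF f (ε i) (k+1) θ u - hF f (ε i) k θ u)) :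
    LB q (Tset S ρ r (k+2)) (fun i => ε i ^ (k+2))
      (fun i θ u => PhiIter f (ε i) (k+2) θ u - PhiIter f (ε i) (k+1) θ u) := by
  have sub2 : Tset S ρ r (k+2) ⊆ Tset S ρ r (k+1) := Tset_sub (S := S) (ρ := ρ) hr (k := k+1)
  have P := ((hD.primitive (Tset_open S ρ r (k+2)) ?_ ?_).rsmul (fun i => (hε i).le)).weight
    (b := fun i => ε i ^ (k+2)) (fun i => by ring)
  · refine P.congr fun i θ u hu => ?_
    rw [PhiIter_succ f (ε i) (k+1), PhiIter_succ f (ε i) k,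
      intervalIntegral.integral_sub ((s1.h.zero.cont i hu).intervalIntegrable _ _)
      ((s0.h.zero.cont i (sub2 hu)).intervalIntegrable _ _), smul_sub]
    abel
  · intro i u hu θ
    have h1 := s1.hper i u hu θ
    have h0 := s0.hper i u (sub2 hu) θ
    simp only at h1 h0 ⊢
    rw [h1, h0]
  · intro i u hu
    rw [intervalIntegral.integral_sub ((s1.h.zero.cont i hu).intervalIntegrable _ _)
      ((s0.h.zero.cont i (sub2 hu)).intervalIntegrable _ _), s1.hmean i u hu,
      s0.hmean i u (sub2 hu), sub_zero]

/-- Main result in abstract form. -/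
theorem main_abs [CompleteSpace E] {q : ℕ} {S : Set E} {ρ r M : ℝ} {f : ℝ → E → E} {ε : I → ℝ}
    (hr : 0 < r) (hM : 0 < M) (hε : ∀ i, 0 < ε i) (hεM : ∀ i, 8 * M * ε i ≤ r)
    (hS : ∃ B, 0 ≤ B ∧ ∀ x ∈ thickening ρ S, ‖x‖ ≤ B)
    (hf : LB q (thickening ρ S) (fun _ : I => (1:ℝ)) (fun _ => f))
    (hfM : ∀ θ, ∀ u ∈ thickening ρ S, ‖f θ u‖ ≤ M)
    (hfp : ∀ u, Function.Periodic (fun θ => f θ u) 1) (m : ℕ) :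
    (∀ i θ, ∀ u ∈ Tset S ρ r (m+2), IsUnit (fderiv ℂ (PhiIter f (ε i) (m+1) θ) u)) ∧
    LB q (Tset S ρ r (m+2)) (fun i => ε i ^ (m+1)) (fun i θ u => Rmap f (ε i) (m+1) θ u) := by
  have good : ∀ k, Good q S ρ r f ε k := by
    intro k
    induction k with
    | zero => exact Good.zero hr hS
    | succ k ih =>
      exact Step.next hr hM hε hεM ih (ih.step hr hM hf hfM hfp) (Good.zero hr hS)
  have step : ∀ k, Step q S ρ r M f ε k := fun k => (good k).step hr hM hf hfM hfp
  have dΦ : ∀ k, LB q (Tset S ρ r (k+1)) (fun i => ε i ^ (k+1))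
      (fun i θ u => PhiIter f (ε i) (k+1) θ u - PhiIter f (ε i) k θ u) := by
    intro k
    induction k with
    | zero => exact (step 0).diff_base hε
    | succ k ih =>
      exact diff_succ hr hε (step k) (step (k+1))
        (diff_h hr hf (good k) (good (k+1)) (step k) (step (k+1)) ih)
  have dh := diff_h hr hf (good m) (good (m+1)) (step m) (step (m+1)) (dΦ m)
  have sub2 : Tset S ρ r (m+2) ⊆ Tset S ρ r (m+1) := Tset_sub (S := S) (ρ := ρ) hr (k := m+1)
  refine ⟨fun i θ u hu => (inv_near ((step (m+1)).dΦn i θ u hu)).1, ?_⟩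
  have inv := LB.inverse (step (m+1)).dΦ (step (m+1)).dΦn
  refine ((inv.app dh).weight (b := fun i => ε i ^ (m+1)) (fun i => by simp)).congr
    fun i θ u hu => ?_
  have e : defect f (ε i) (m+1) θ u = - (hF f (ε i) (m+1) θ u - hF f (ε i) m θ u) := by
    have hne : ε i ≠ 0 := (hε i).ne'
    rw [defect, ((step m).hasDerivAt i θ (sub2 hu)).deriv, smul_smul, one_div,
      inv_mul_cancel₀ hne, one_smul, hF.eq_1 f (ε i) (m+1)]
    abel
  rw [Rmap, e, map_neg, neg_neg]

end Strob

namespace Strob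

open Set Metric Filter Topology


universe u v

section

variable {X : Type v} {E : Type u} [NormedAddCommGroup X] [NormedSpace ℝ X]
    [NormedAddCommGroup E] [NormedSpace ℂ E]

theorem thick_sub_Kset (ι : X →ₗᵢ[ℝ] E) (K : Set X) (ρ : ℝ) :
    thickening ρ (ι '' closure K) ⊆ Kset ι K ρ := by
  intro x hx
  rw [mem_thickening_iff] at hx
  obtain ⟨_, ⟨k, hk, rfl⟩, hd⟩ := hx
  refine ⟨k, hk, x - ι k, ?_, by abel⟩
  rw [← dist_eq_norm]; exact hd.le

theorem Kset_sub_thick (ι : X →ₗᵢ[ℝ] E) (K : Set X) {ρ ρ' : ℝ} (h : ρ < ρ') :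
    Kset ι K ρ ⊆ thickening ρ' (ι '' closure K) := by
  rintro _ ⟨k, hk, w, hw, rfl⟩
  rw [mem_thickening_iff]
  refine ⟨_, ⟨k, hk, rfl⟩, ?_⟩
  rw [dist_eq_norm, add_sub_cancel_left]
  linarith

theorem LB_of_assumption {I : Type*} {f : ℝ → E → E} {T : Set E} {p : ℕ} {M : ℝ} (hM : 0 < M)
    (hc : ∀ u, ContDiff ℝ p (fun θ => f θ u))
    (hd : ∀ ν ≤ p, ∀ θ : ℝ, DifferentiableOn ℂ (fun u => iteratedDeriv ν (fun τ => f τ u) θ) T)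
    (hb : ∀ ν ≤ p, ∀ θ : ℝ, ∀ u ∈ T, ‖iteratedDeriv ν (fun τ => f τ u) θ‖ ≤ M * ν.factorial) :
    ∀ j ν : ℕ, ν + j + 1 ≤ p → LB j T (fun _ : I => (1:ℝ))
      (fun _ θ u => iteratedDeriv ν (fun τ => f τ u) θ) := by
  have der : ∀ ν, ν + 1 ≤ p → ∀ u θ, HasDerivAt (fun τ => iteratedDeriv ν (fun τ => f τ u) τ)
      (iteratedDeriv (ν+1) (fun τ => f τ u) θ) θ := by
    intro ν hν u θ
    have h1 : Differentiable ℝ (iteratedDeriv ν (fun τ => f τ u)) :=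
      (hc u).differentiable_iteratedDeriv ν (by exact_mod_cast hν)
    rw [iteratedDeriv_succ]
    exact (h1 θ).hasDerivAt
  have base : ∀ ν, ν + 1 ≤ p → LB0 T (fun _ : I => (1:ℝ))
      (fun _ θ u => iteratedDeriv ν (fun τ => f τ u) θ) := by
    intro ν hν
    refine ⟨fun _ θ => hd ν (by omega) θ, fun _ => zero_le_one,
      ⟨M * ν.factorial, by positivity, fun _ θ u hu => by simpa using hb ν (by omega) θ u hu⟩,
      ⟨M * (ν+1).factorial, by positivity, fun _ θ θ' u hu => ?_⟩⟩
    have := convex_univ.norm_image_sub_le_of_norm_hasDerivWithin_le (𝕜 := ℝ)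
      (f := fun τ => iteratedDeriv ν (fun τ => f τ u) τ)
      (fun x _ => (der ν hν u x).hasDerivWithinAt) (fun x _ => hb (ν+1) hν x u hu)
      (mem_univ θ') (mem_univ θ)
    simpa using this
  intro j
  induction j with
  | zero => intro ν hν; exact base ν (by omega)
  | succ j ih =>
    intro ν hν
    exact ⟨base ν (by omega), _, fun _ θ u _ => der ν (by omega) u θ, ih (ν+1) (by omega)⟩

theorem exists_uniform {α : Type*} (N : ℕ) (P : ℕ → ℕ → ℝ → α → Prop)
    (hmono : ∀ ν ξ C C' x, C ≤ C' → P ν ξ C x → P ν ξ C' x)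
    (h : ∀ ν ≤ N, ∀ ξ ≤ N, ∃ C, 0 ≤ C ∧ ∀ x, P ν ξ C x) :
    ∃ C, ∀ ν ≤ N, ∀ ξ ≤ N, ∀ x, P ν ξ C x := by
  choose! c hc0 hc using h
  refine ⟨∑ ν ∈ Finset.range (N+1), ∑ ξ ∈ Finset.range (N+1), c ν ξ, fun ν hν ξ hξ x => ?_⟩
  refine hmono ν ξ (c ν ξ) _ x ?_ (hc ν hν ξ hξ x)
  have nn : ∀ ν ∈ Finset.range (N+1), ∀ ξ ∈ Finset.range (N+1), 0 ≤ c ν ξ := by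
    intro ν hν ξ hξ
    rw [Finset.mem_range] at hν hξ
    exact hc0 ν (by omega) ξ (by omega)
  have mν : ν ∈ Finset.range (N+1) := Finset.mem_range.2 (by omega)
  have mξ : ξ ∈ Finset.range (N+1) := Finset.mem_range.2 (by omega)
  calc c ν ξ ≤ ∑ ξ ∈ Finset.range (N+1), c ν ξ :=
        Finset.single_le_sum (f := fun ξ => c ν ξ) (nn ν mν) mξ
    _ ≤ _ := Finset.single_le_sum (f := fun ν => ∑ ξ ∈ Finset.range (N+1), c ν ξ)
        (fun ν hν => Finset.sum_nonneg (nn ν hν)) mν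

end

end Strob

/-- Under Assumptions (K) and (A_p), with `ε₀ = R/(8M)` and `(n+1)ε ≤ ε₀`, the map
`R^[n]_θ(u) = −(∂_uΦ^[n]_θ(u))⁻¹ δ^[n]_θ(u)` is well-defined on `𝕋 × K_{R/2}` and there is
a constant `C`, independent of `ε`, with `‖∂_θ^ν ∂_u^ξ R^[n]‖ ≤ C ε^n` on `𝕋 × K_{R/2}`
for `ν + ξ ≤ p`; equivalently `‖∂_t^ν ∂_u^ξ R^[n]_{t/ε}‖ ≤ C ε^{n−ν}`. -/
theorem statement8
    {X Xc : Type*} [NormedAddCommGroup X] [NormedSpace ℝ X] [CompleteSpace X]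
    [NormedAddCommGroup Xc] [NormedSpace ℂ Xc] [CompleteSpace Xc]
    (ι : X →ₗᵢ[ℝ] Xc)
    (K U0 : Set X) (hKopen : IsOpen K) (hKbdd : Bornology.IsBounded (closure K))
    (hU0open : IsOpen U0) (hU0K : U0 ⊆ K)
    (fX : ℝ → X → X) (fC : ℝ → Xc → Xc)
    (hper : ∀ u, Function.Periodic (fun θ => fX θ u) 1)
    (hperC : ∀ u, Function.Periodic (fun θ => fC θ u) 1)
    -- Assumption (K)
    (hAssK : ∀ u₀ ∈ U0, ∀ ε ∈ Set.Ioc (0:ℝ) 1, ∃ u : ℝ → X, u 0 = u₀ ∧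
      ∀ t ∈ Set.Icc (0:ℝ) 1, HasDerivAt u (fX (t/ε) (u t)) t ∧ u t ∈ K)
    -- Assumption (A_p)
    (p : ℕ) (hp : 1 ≤ p)
    (R M : ℝ) (hR : 0 < R) (hM : 0 < M)
    (hcontdiffθ : ∀ u, ContDiff ℝ p (fun θ => fC θ u))
    (hext : ∀ θ, ∀ x : X, ι x ∈ Kset ι K (2*R) → fC θ (ι x) = ι (fX θ x))
    (hanal : ∀ ν ≤ p, ∀ θ : ℝ,
      AnalyticOn ℂ (fun u => iteratedDeriv ν (fun τ => fC τ u) θ) (Kset ι K (2*R)))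
    (hbound : ∀ σ ∈ Set.Ioc (0:ℝ) 3, ∀ ν ≤ p, ∀ θ : ℝ, ∀ u ∈ Kset ι K (2*R),
      σ^ν / (Nat.factorial ν) * ‖iteratedDeriv ν (fun τ => fC τ u) θ‖ ≤ M)
    (ε₀ : ℝ) (hε₀ : ε₀ = R / (8*M))
    (n : ℕ) (hn : 1 ≤ n) :
    -- well-definedness: ∂_uΦ^[n]_θ(u) is invertible on K_{R/2}
    (∀ ε : ℝ, 0 < ε → (n+1 : ℝ) * ε ≤ ε₀ → ∀ θ : ℝ, ∀ u ∈ Kset ι K (R/2),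
        ∃ e : Xc ≃L[ℂ] Xc, (e : Xc →L[ℂ] Xc) = fderiv ℂ (PhiIter fC ε n θ) u) ∧
    -- the uniform bounds, with a constant C independent of ε
    ∃ C : ℝ, ∀ ε : ℝ, 0 < ε → (n+1 : ℝ) * ε ≤ ε₀ →
      ∀ ν ξ : ℕ, ν + ξ ≤ p →
        (∀ θ : ℝ, ∀ u ∈ Kset ι K (R/2),
          ‖iteratedDeriv ν (fun τ => iteratedFDeriv ℂ ξ (Rmap fC ε n τ) u) θ‖ ≤
            C * ε^n) ∧
        (∀ t : ℝ, ∀ u ∈ Kset ι K (R/2),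
          ‖iteratedDeriv ν (fun s => iteratedFDeriv ℂ ξ (Rmap fC ε n (s/ε)) u) t‖ ≤
            C * ε^n / ε^ν) := by
  classical
  obtain ⟨m, rfl⟩ : ∃ m, n = m + 1 := ⟨n - 1, by omega⟩
  set S : Set Xc := ι '' closure K with hS
  set r : ℝ := R / ((m:ℝ) + 2) with hr
  have hrpos : 0 < r := by positivity
  let I := {ε : ℝ // 0 < ε ∧ (((m + 1 : ℕ) : ℝ) + 1) * ε ≤ ε₀}
  have hεM : ∀ i : I, 8 * M * i.1 ≤ r := by
    rintro ⟨x, hx, h2⟩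
    rw [hε₀, le_div_iff₀ (by positivity)] at h2
    rw [hr, le_div_iff₀ (by positivity)]
    push_cast at h2
    change 8 * M * x * ((m:ℝ) + 2) ≤ R
    linarith
  have hsub : Metric.thickening (2*R) S ⊆ Kset ι K (2*R) := Strob.thick_sub_Kset ι K (2*R)
  have hbd : ∀ ν ≤ p, ∀ θ : ℝ, ∀ u ∈ Metric.thickening (2*R) S,
      ‖iteratedDeriv ν (fun τ => fC τ u) θ‖ ≤ M * ν.factorial := by
    intro ν hν θ u hu
    have h1 := hbound 1 (by norm_num) ν hν θ u (hsub hu)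
    rw [one_pow, one_div, inv_mul_le_iff₀ (by positivity)] at h1
    linarith
  have hlb := Strob.LB_of_assumption (I := I) (T := Metric.thickening (2*R) S) hM hcontdiffθ
    (fun ν hν θ => ((hanal ν hν θ).differentiableOn).mono hsub) hbd (p-1) 0 (by omega)
  simp only [iteratedDeriv_zero] at hlb
  have hSb : ∃ B, 0 ≤ B ∧ ∀ x ∈ Metric.thickening (2*R) S, ‖x‖ ≤ B := by
    obtain ⟨B, hB⟩ := hKbdd.exists_norm_le
    refine ⟨|B| + 2*R, by positivity, fun x hx => ?_⟩
    obtain ⟨k, hk, w, hw, rfl⟩ := hsub hx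
    have h1 := norm_add_le (ι k) w
    rw [ι.norm_map] at h1
    have h2 := hB k hk
    have h3 := le_abs_self B
    linarith
  have hfM : ∀ θ, ∀ u ∈ Metric.thickening (2*R) S, ‖fC θ u‖ ≤ M := by
    intro θ u hu
    simpa using hbd 0 (by omega) θ u hu
  obtain ⟨hunit, hR'⟩ := Strob.main_abs (I := I) (ε := fun i => i.1) hrpos hM
    (fun i => i.2.1) hεM hSb hlb hfM hperC m
  have hT : Strob.Tset S (2*R) r (m+2) = Metric.thickening R S := by
    rw [Strob.Tset]
    congr 1
    rw [hr]; push_cast; field_simp; ring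
  rw [hT] at hunit hR'
  have hK1 : Kset ι K (R/2) ⊆ Metric.thickening (R - R/4) S :=
    Strob.Kset_sub_thick ι K (by linarith)
  have hK2 : Kset ι K (R/2) ⊆ Metric.thickening R S := Strob.Kset_sub_thick ι K (by linarith)
  refine ⟨?_, ?_⟩
  · intro ε hε hε1 θ u hu
    obtain ⟨x, hx⟩ := hunit ⟨ε, hε, hε1⟩ θ u (hK2 hu)
    exact ⟨ContinuousLinearEquiv.ofUnit x, hx⟩
  · have key : ∀ ν ≤ p, ∀ ξ ≤ p, ∃ C : ℝ, 0 ≤ C ∧ ∀ x : I × ℝ × Xc, x.2.2 ∈ Kset ι K (R/2) →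
        ‖iteratedDeriv ν (fun τ => iteratedFDeriv ℂ ξ (Rmap fC x.1.1 (m+1) τ) x.2.2) x.2.1‖ ≤
          C * x.1.1^(m+1) := by
      intro ν hν ξ _
      obtain ⟨C, hC, hb⟩ := (Strob.LB.iterFDeriv ξ (by positivity : 0 < R/4) hR').iterDeriv
        ν (by omega)
      exact ⟨C, hC, fun x hx => hb x.1 x.2.1 x.2.2 (hK1 hx)⟩
    obtain ⟨C, hC⟩ := Strob.exists_uniform p
      (fun ν ξ C (x : I × ℝ × Xc) => x.2.2 ∈ Kset ι K (R/2) →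
        ‖iteratedDeriv ν (fun τ => iteratedFDeriv ℂ ξ (Rmap fC x.1.1 (m+1) τ) x.2.2) x.2.1‖ ≤
          C * x.1.1^(m+1)) (by
        intro ν ξ C C' x hCC h hx
        refine (h hx).trans ?_
        have := x.1.2.1
        gcongr) key
    refine ⟨C, fun ε hε hε1 ν ξ hνξ => ?_⟩
    have hb : ∀ θ : ℝ, ∀ u ∈ Kset ι K (R/2),
        ‖iteratedDeriv ν (fun τ => iteratedFDeriv ℂ ξ (Rmap fC ε (m+1) τ) u) θ‖ ≤
          C * ε^(m+1) := fun θ u hu =>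
      hC ν (by omega) ξ (by omega) (⟨ε, hε, hε1⟩, θ, u) hu
    refine ⟨hb, fun t u hu => ?_⟩
    have e := Strob.iteratedDeriv_scale
      (fun τ => iteratedFDeriv ℂ ξ (Rmap fC ε (m+1) τ) u) ε⁻¹ ν
    have e2 : (fun s => iteratedFDeriv ℂ ξ (Rmap fC ε (m+1) (s/ε)) u) =
        fun s => iteratedFDeriv ℂ ξ (Rmap fC ε (m+1) (ε⁻¹ * s)) u := by
      ext1 s; rw [div_eq_inv_mul]
    rw [e2, e, norm_smul, norm_pow, norm_inv, Real.norm_of_nonneg hε.le]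
    have h1 := hb (ε⁻¹ * t) u hu
    calc _ ≤ (ε⁻¹)^ν * (C * ε^(m+1)) := by gcongr
      _ = C * ε^(m+1) / ε^ν := by rw [inv_pow]; field_simp
end

section
/- Let (g_k)_{k≥1} be a sequence of real numbers such that g_1 ≤ e and, for every k ≥ 1, g_{k+1} ≤ 3 + g_k/4 + (e − 1)·exp( g_k/(8k + 4) ). Then g_k ≤ 8 for all k ≥ 1. -/
/-- If `g₁ ≤ e` and `g_{k+1} ≤ 3 + g_k/4 + (e−1)·exp(g_k/(8k+4))` for all `k ≥ 1`,
then `g_k ≤ 8` for all `k ≥ 1`. -/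
theorem statement13 (g : ℕ → ℝ)
    (h1 : g 1 ≤ Real.exp 1)
    (hrec : ∀ k : ℕ, 1 ≤ k →
      g (k+1) ≤ 3 + g k / 4 + (Real.exp 1 - 1) * Real.exp (g k / (8*k + 4))) :
    ∀ k : ℕ, 1 ≤ k → g k ≤ 8 := by
  have he := Real.exp_one_lt_d9
  have he' := Real.exp_one_gt_d9
  have hb : Real.exp (2/5) ≤ 5/3 := by
    have h := Real.add_one_le_exp (-(2/5) : ℝ)
    have h2 : Real.exp (2/5) * Real.exp (-(2/5)) = 1 := by
      rw [← Real.exp_add]; simp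
    nlinarith [Real.exp_pos (2/5 : ℝ)]
  have key : ∀ k : ℕ, 1 ≤ k → g k ≤ 8 → g k / (8*k+4) ≤ 2/5 → g (k+1) ≤ 8 := by
    intro k hk h8 hq
    have h := hrec k hk
    have h3 := (Real.exp_le_exp.mpr hq).trans hb
    have h4 : (Real.exp 1 - 1) * Real.exp (g k / (8*k + 4)) ≤ (Real.exp 1 - 1) * (5/3) :=
      mul_le_mul_of_nonneg_left h3 (by linarith)
    linarith
  intro k hk
  induction k, hk using Nat.le_induction with
  | base => linarith
  | succ k hk ih =>
    refine key k hk ih ?_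
    rcases Nat.eq_or_lt_of_le hk with h | h
    · subst h
      norm_num
      linarith
    · have h2 : (2:ℝ) ≤ k := by exact_mod_cast h
      rw [div_le_iff₀ (by positivity)]
      linarith
end

section
/- For ξ ≥ 0 and an integer ν ≥ 0, let P_ν(ξ) denote the ν-th derivative at x = 0 of the function x ↦ exp( x + ξx/(1−x) ) / (1−x), which is analytic on the complex disc |x| < 1. Then |P_ν(ξ)| ≤ 2^{ν+1} · √e · e^{ξ} · ν! for all ξ ≥ 0 and all ν ≥ 0. -/
/-- Cauchy estimate: the ν-th derivative at `x = 0` of the analytic function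
`x ↦ exp(x + ξx/(1−x))/(1−x)` is bounded by `2^{ν+1}·√e·e^ξ·ν!` for every `ξ ≥ 0`. -/
theorem statement14 (ξ : ℝ) (hξ : 0 ≤ ξ) (ν : ℕ) :
    ‖iteratedDeriv ν
        (fun x : ℂ => Complex.exp (x + (ξ:ℂ) * x / (1 - x)) / (1 - x)) 0‖ ≤
      2^(ν+1) * Real.sqrt (Real.exp 1) * Real.exp ξ * (Nat.factorial ν) := by
  have key : ∀ z : ℂ, ‖z‖ ≤ 1/2 → 1/2 ≤ ‖1 - z‖ := by
    intro z hz
    have h := norm_sub_norm_le (1:ℂ) z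
    rw [norm_one] at h
    linarith
  have hne : ∀ z : ℂ, ‖z‖ ≤ 1/2 → 1 - z ≠ 0 := by
    intro z hz h0
    have := key z hz
    rw [h0, norm_zero] at this
    norm_num at this
  have hd : DiffContOnCl ℂ
      (fun x : ℂ => Complex.exp (x + (ξ:ℂ) * x / (1 - x)) / (1 - x)) (Metric.ball 0 (1/2)) := by
    apply DifferentiableOn.diffContOnCl
    intro z hz
    have hz' := Metric.closure_ball_subset_closedBall hz
    rw [mem_closedBall_zero_iff] at hz'
    have h1 := hne z hz'
    apply DifferentiableAt.differentiableWithinAt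
    fun_prop (disch := assumption)
  have hC : ∀ z ∈ Metric.sphere (0:ℂ) (1/2),
      ‖(fun x : ℂ => Complex.exp (x + (ξ:ℂ) * x / (1 - x)) / (1 - x)) z‖ ≤
        2 * (Real.sqrt (Real.exp 1) * Real.exp ξ) := by
    intro z hz
    rw [mem_sphere_zero_iff_norm] at hz
    have h1 := key z hz.le
    have hpos : 0 < ‖1 - z‖ := by linarith
    have h2 : ‖z + (ξ:ℂ) * z / (1 - z)‖ ≤ 1/2 + ξ := by
      refine (norm_add_le _ _).trans (add_le_add hz.le ?_)
      rw [norm_div, norm_mul, hz, Complex.norm_real, Real.norm_of_nonneg hξ, div_le_iff₀ hpos]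
      exact mul_le_mul_of_nonneg_left h1 hξ
    have h3 : ‖Complex.exp (z + (ξ:ℂ) * z / (1 - z))‖ ≤
        Real.sqrt (Real.exp 1) * Real.exp ξ := by
      rw [← Real.exp_half, ← Real.exp_add]
      exact (Complex.norm_exp_le_exp_norm _).trans (Real.exp_le_exp.2 h2)
    have h4 : 0 ≤ Real.sqrt (Real.exp 1) * Real.exp ξ := by positivity
    simp only [norm_div]
    rw [div_le_iff₀ hpos]
    nlinarith
  refine (Complex.norm_iteratedDeriv_le_of_forall_mem_sphere_norm_le ν
    (by norm_num) hd hC).trans (le_of_eq ?_)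
  rw [one_div, inv_pow, div_inv_eq_mul]
  ring
end

section
/- Let X be a Banach space, ε ∈ (0,1], and let L : [0,1] → B(X) be a continuous family of bounded linear operators with ‖L(t)‖ ≤ 𝓛 for all t. Let b : ℝ × [0,1] → X be continuously differentiable, 1-periodic in its first variable θ, with ∫₀¹ b(θ,t) dθ = 0 for every t ∈ [0,1], and with sup |b| ≤ B, sup ‖∂_θ b‖ ≤ B and sup ‖∂_t b‖ ≤ B. If w : [0,1] → X is differentiable with ẇ(t) = L(t) w(t) + b(t/ε, t) and w(0) = 0, then there exists a constant M₀, independent of ε, B, 𝓛 and w (for instance M₀ = 3), such that ‖w(t)‖ ≤ M₀ · B · e^{𝓛 t} · ε for all t ∈ [0,1]. -/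
open Set

lemma osc_bound {X : Type*} [NormedAddCommGroup X] [NormedSpace ℝ X] [CompleteSpace X]
    (ε : ℝ) (hε : 0 < ε) (b : ℝ → ℝ → X)
    (hb : ContDiff ℝ 1 (fun p : ℝ × ℝ => b p.1 p.2))
    (hper : ∀ t, Function.Periodic (fun θ => b θ t) 1)
    (hav : ∀ t ∈ Set.Icc (0:ℝ) 1, (∫ θ in (0:ℝ)..1, b θ t) = 0)
    (B : ℝ) (hB : ∀ θ : ℝ, ∀ t ∈ Set.Icc (0:ℝ) 1, ‖b θ t‖ ≤ B)
    (hBt : ∀ θ : ℝ, ∀ t ∈ Set.Icc (0:ℝ) 1, ‖deriv (fun t' => b θ t') t‖ ≤ B)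
    (t : ℝ) (ht : t ∈ Set.Icc (0:ℝ) 1) :
    ‖∫ s in (0:ℝ)..t, b (s/ε) s‖ ≤ 2 * B * ε := by
  have hB0 : 0 ≤ B := (norm_nonneg _).trans (hB 0 t ht)
  have hbc : Continuous (fun p : ℝ × ℝ => b p.1 p.2) := hb.continuous
  have hc : Continuous (fun s => b (s/ε) s) :=
    hbc.comp (f := fun s : ℝ => (s/ε, s)) (by fun_prop)
  have hc2 : ∀ a, Continuous (fun s => b (s/ε) a) := fun a =>
    hbc.comp (f := fun s : ℝ => (s/ε, a)) (by fun_prop)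
  have hlip : ∀ θ, ∀ x ∈ Set.Icc (0:ℝ) 1, ∀ y ∈ Set.Icc (0:ℝ) 1,
      ‖b θ y - b θ x‖ ≤ B * ‖y - x‖ := by
    intro θ x hx y hy
    refine Convex.norm_image_sub_le_of_norm_deriv_le (f := fun t' => b θ t') (s := Set.Icc (0:ℝ) 1)
      (fun z _ => ?_) (fun z hz => hBt θ z hz) (convex_Icc 0 1) hx hy
    have h1 : Differentiable ℝ (fun p : ℝ × ℝ => b p.1 p.2) := hb.differentiable (by norm_num)
    exact (h1.comp (f := fun t' : ℝ => (θ, t')) (by fun_prop)) z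
  have hind : ∀ n : ℕ, (n:ℝ) * ε ≤ 1 →
      ‖∫ s in (0:ℝ)..(n * ε), b (s/ε) s‖ ≤ n * (B * ε * ε) := by
    intro n
    induction n with
    | zero => intro _; simp
    | succ k ih =>
      intro hk
      push_cast at hk ⊢
      have hk0 : (0:ℝ) ≤ k * ε := by positivity
      have hk1 : (k:ℝ) * ε ≤ 1 := by nlinarith
      have hmem : (k:ℝ) * ε ∈ Set.Icc (0:ℝ) 1 := ⟨hk0, hk1⟩
      have hz : ∫ s in ((k:ℝ) * ε)..((k+1) * ε), b (s/ε) (k*ε) = 0 := by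
        rw [intervalIntegral.integral_comp_div (fun θ => b θ (k*ε)) hε.ne']
        rw [mul_div_cancel_right₀ _ hε.ne', mul_div_cancel_right₀ _ hε.ne',
          (hper (k*ε)).intervalIntegral_add_eq k 0, zero_add, hav _ hmem, smul_zero]
      have hstep : ‖∫ s in ((k:ℝ) * ε)..((k+1) * ε), b (s/ε) s‖ ≤ B * ε * ε := by
        have : ∫ s in ((k:ℝ) * ε)..((k+1) * ε), b (s/ε) s
            = ∫ s in ((k:ℝ) * ε)..((k+1) * ε), (b (s/ε) s - b (s/ε) (k*ε)) := by
          rw [intervalIntegral.integral_sub (hc.intervalIntegrable _ _)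
            ((hc2 _).intervalIntegrable _ _), hz, sub_zero]
        rw [this]
        refine (intervalIntegral.norm_integral_le_of_norm_le_const (C := B * ε) ?_).trans ?_
        · intro s hs
          rw [uIoc_of_le (by nlinarith)] at hs
          refine (hlip _ _ hmem s ⟨by linarith [hs.1], by linarith [hs.2]⟩).trans ?_
          refine mul_le_mul_of_nonneg_left ?_ hB0
          rw [Real.norm_eq_abs, abs_le]
          constructor <;> nlinarith [hs.1, hs.2]
        · rw [show ((k:ℝ)+1) * ε - k * ε = ε by ring, abs_of_pos hε]
      rw [← intervalIntegral.integral_add_adjacent_intervals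
        (hc.intervalIntegrable 0 (k*ε)) (hc.intervalIntegrable _ _)]
      refine (norm_add_le _ _).trans ?_
      linarith [ih hk1]
  set n := ⌊t/ε⌋₊ with hn
  have h1 : (n:ℝ) * ε ≤ t := by
    have := Nat.floor_le (div_nonneg ht.1 hε.le)
    rwa [le_div_iff₀ hε] at this
  have h2 : t < (n+1) * ε := by
    have := Nat.lt_floor_add_one (t/ε)
    rwa [div_lt_iff₀ hε] at this
  have hn0 : (0:ℝ) ≤ n * ε := by positivity
  rw [← intervalIntegral.integral_add_adjacent_intervals
        (hc.intervalIntegrable 0 (n*ε)) (hc.intervalIntegrable _ _)]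
  have h3 := hind n (h1.trans ht.2)
  have h4 : ‖∫ s in (n * ε)..t, b (s/ε) s‖ ≤ B * |t - n * ε| := by
    refine intervalIntegral.norm_integral_le_of_norm_le_const ?_
    intro s hs
    rw [uIoc_of_le h1] at hs
    exact hB _ _ ⟨by linarith [hs.1], by linarith [hs.2, ht.2]⟩
  rw [abs_of_nonneg (by linarith)] at h4
  have h5 : B * (t - n * ε) ≤ B * ε := mul_le_mul_of_nonneg_left (by linarith) hB0
  have h6 : n * (B * ε * ε) ≤ B * ε := by
    have : (n * ε) * (B * ε) ≤ 1 * (B * ε) :=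
      mul_le_mul_of_nonneg_right (h1.trans ht.2) (by positivity)
    linarith
  refine (norm_add_le _ _).trans ?_
  linarith


/-- Gronwall-type estimate for a micro variable driven by a zero-average oscillatory
source: there is a constant `M₀` (independent of `ε`, `B`, `𝓛` and `w`) such that any
solution of `ẇ = L(t)w + b(t/ε, t)`, `w(0) = 0`, with `‖L(t)‖ ≤ 𝓛`, `b` 1-periodic with
zero θ-average and `b, ∂_θ b, ∂_t b` bounded by `B`, satisfies
`‖w(t)‖ ≤ M₀ B e^{𝓛 t} ε` on `[0,1]`. -/
theorem statement15
    {X : Type*} [NormedAddCommGroup X] [NormedSpace ℝ X] [CompleteSpace X] :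
    ∃ M₀ : ℝ, 0 < M₀ ∧
      ∀ ε : ℝ, ε ∈ Set.Ioc (0:ℝ) 1 →
      ∀ L : ℝ → X →L[ℝ] X, ContinuousOn L (Set.Icc (0:ℝ) 1) →
      ∀ 𝓛 : ℝ, (∀ t ∈ Set.Icc (0:ℝ) 1, ‖L t‖ ≤ 𝓛) →
      ∀ b : ℝ → ℝ → X, ContDiff ℝ 1 (fun p : ℝ × ℝ => b p.1 p.2) →
      (∀ t, Function.Periodic (fun θ => b θ t) 1) →
      (∀ t ∈ Set.Icc (0:ℝ) 1, (∫ θ in (0:ℝ)..1, b θ t) = 0) →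
      ∀ B : ℝ,
      (∀ θ : ℝ, ∀ t ∈ Set.Icc (0:ℝ) 1, ‖b θ t‖ ≤ B) →
      (∀ θ : ℝ, ∀ t ∈ Set.Icc (0:ℝ) 1, ‖deriv (fun θ' => b θ' t) θ‖ ≤ B) →
      (∀ θ : ℝ, ∀ t ∈ Set.Icc (0:ℝ) 1, ‖deriv (fun t' => b θ t') t‖ ≤ B) →
      ∀ w : ℝ → X, w 0 = 0 →
      (∀ t ∈ Set.Icc (0:ℝ) 1, HasDerivAt w (L t (w t) + b (t/ε) t) t) →
      ∀ t ∈ Set.Icc (0:ℝ) 1, ‖w t‖ ≤ M₀ * B * Real.exp (𝓛 * t) * ε := by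
  refine ⟨2, by norm_num, ?_⟩
  intro ε hε L _ 𝓛 hL b hb hper hav B hB _ hBt w hw0 hw t ht
  have hg := osc_bound ε hε.1 b hb hper hav B hB hBt
  have hc : Continuous (fun s => b (s/ε) s) :=
    hb.continuous.comp (f := fun s : ℝ => (s/ε, s)) (by fun_prop)
  set g : ℝ → X := fun t => ∫ s in (0:ℝ)..t, b (s/ε) s with hgdef
  set δ := 2 * B * ε with hδ
  have hg' : ∀ t, HasDerivAt g (b (t/ε) t) t := fun t =>
    intervalIntegral.integral_hasDerivAt_right (hc.intervalIntegrable _ _)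
      (hc.stronglyMeasurableAtFilter _ _) hc.continuousAt
  have hv : ∀ t ∈ Set.Icc (0:ℝ) 1, HasDerivAt (fun s => w s - g s) (L t (w t)) t := by
    intro s hs
    have := (hw s hs).sub (hg' s)
    rwa [add_sub_cancel_right] at this
  have h𝓛 : 0 ≤ 𝓛 := (norm_nonneg _).trans (hL t ht)
  have hgr := norm_le_gronwallBound_of_norm_deriv_right_le (f := fun s => w s - g s)
    (f' := fun s => L s (w s)) (δ := 0) (K := 𝓛) (ε := 𝓛 * δ) (a := 0) (b := 1)
    (fun s hs => (hv s hs).continuousAt.continuousWithinAt)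
    (fun s hs => (hv s ⟨hs.1, hs.2.le⟩).hasDerivWithinAt)
    (by simp [hgdef, hw0])
    (fun s hs => by
      have hs' : s ∈ Set.Icc (0:ℝ) 1 := ⟨hs.1, hs.2.le⟩
      have h1 : ‖w s‖ ≤ ‖w s - g s‖ + δ := by
        have := norm_add_le (w s - g s) (g s)
        rw [sub_add_cancel] at this
        linarith [hg s hs']
      calc ‖L s (w s)‖ ≤ ‖L s‖ * ‖w s‖ := (L s).le_opNorm _
        _ ≤ 𝓛 * (‖w s - g s‖ + δ) := mul_le_mul (hL s hs') h1 (norm_nonneg _) h𝓛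
        _ = _ := by ring) t ht
  have hgb : gronwallBound 0 𝓛 (𝓛 * δ) (t - 0) = δ * (Real.exp (𝓛 * t) - 1) := by
    rcases eq_or_ne 𝓛 0 with h | h
    · simp [h, gronwallBound_K0]
    · rw [gronwallBound_of_K_ne_0 h, sub_zero]
      field_simp
      ring
  rw [hgb] at hgr
  have h2 := norm_add_le (w t - g t) (g t)
  rw [sub_add_cancel] at h2
  have h3 := hg t ht
  calc ‖w t‖ ≤ δ * (Real.exp (𝓛 * t) - 1) + δ := by linarith
    _ = 2 * B * Real.exp (𝓛 * t) * ε := by rw [hδ]; ring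
end

section
/- Let S be a skew-symmetric real d×d matrix (Sᵀ = −S), let I : ℝ^d → ℝ be continuously differentiable with gradient ∇I, and let ε ∈ ℝ. If v, Φ ∈ ℝ^d satisfy the averaged-vector-field relation Φ = v + ε·S·∫₀¹ ∇I( μΦ + (1−μ)v ) dμ, then I(Φ) = I(v). -/
open Matrix

/-- The averaged-vector-field change of variable preserves the first integral `I`:
if `S` is skew-symmetric, `I` is `C¹` with gradient `g`, and
`Φ = v + ε·S·∫₀¹ ∇I(μΦ + (1−μ)v) dμ`, then `I(Φ) = I(v)`. -/
theorem statement17 (d : ℕ)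
    (S : Matrix (Fin d) (Fin d) ℝ) (hS : Sᵀ = -S)
    (I : (Fin d → ℝ) → ℝ) (hI : ContDiff ℝ 1 I)
    (g : (Fin d → ℝ) → (Fin d → ℝ))
    (hg : ∀ u w : Fin d → ℝ, fderiv ℝ I u w = ∑ i, g u i * w i)
    (ε : ℝ) (v Φ : Fin d → ℝ)
    (havf : Φ = v + ε • S.mulVec (∫ μ in (0:ℝ)..1, g (μ • Φ + (1-μ) • v))) :
    I Φ = I v := by
  have hgc : Continuous g := by
    refine continuous_pi fun i => ?_
    have h : (fun u => g u i) = fun u => fderiv ℝ I u (Pi.single i 1) := by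
      funext u
      rw [hg]
      simp [Pi.single_apply]
    rw [h]
    exact (hI.continuous_fderiv (by norm_num)).clm_apply continuous_const
  have hpc : Continuous fun μ : ℝ => g (μ • Φ + (1-μ) • v) := by
    exact hgc.comp (by fun_prop)
  set G := ∫ μ in (0:ℝ)..1, g (μ • Φ + (1-μ) • v) with hG
  let L : (Fin d → ℝ) →L[ℝ] ℝ := ∑ i, (Φ - v) i • ContinuousLinearMap.proj i
  have hL : ∀ x, L x = ∑ i, x i * (Φ - v) i := by
    intro x
    simp only [L, _root_.sum_apply, _root_.smul_apply,
      ContinuousLinearMap.proj_apply, smul_eq_mul]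
    exact Finset.sum_congr rfl fun i _ => mul_comm _ _
  have hder : ∀ μ : ℝ, HasDerivAt (fun μ : ℝ => I (μ • Φ + (1-μ) • v))
      (L (g (μ • Φ + (1-μ) • v))) μ := by
    intro μ
    have h1 : HasDerivAt (fun μ : ℝ => μ • Φ + (1-μ) • v) (Φ - v) μ := by
      have := ((hasDerivAt_id μ).smul_const Φ).add
        (((hasDerivAt_id μ).const_sub 1).smul_const v)
      have e : (1:ℝ) • Φ + (-1:ℝ) • v = Φ - v := by
        rw [one_smul, neg_one_smul, sub_eq_add_neg]
      rw [e] at this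
      exact this
    have h2 := ((hI.differentiable (by norm_num)) (μ • Φ + (1-μ) • v)).hasFDerivAt
    have h3 := h2.comp_hasDerivAt μ h1
    rw [hg, ← hL] at h3
    exact h3
  have hint := intervalIntegral.integral_eq_sub_of_hasDerivAt (a := 0) (b := 1)
    (fun μ _ => hder μ) ((L.continuous.comp hpc).intervalIntegrable 0 1)
  rw [L.intervalIntegral_comp_comm (hpc.intervalIntegrable 0 1), ← hG] at hint
  have hskew : G ⬝ᵥ S.mulVec G = 0 := by
    have h : G ⬝ᵥ S.mulVec G = -(G ⬝ᵥ S.mulVec G) := by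
      conv_lhs => rw [dotProduct_mulVec, ← mulVec_transpose, hS, neg_mulVec, neg_dotProduct,
        dotProduct_comm]
    linarith
  have hw : Φ - v = ε • S.mulVec G := sub_eq_of_eq_add' havf
  have hz : L G = 0 := by
    rw [hL, hw]
    change G ⬝ᵥ (ε • S.mulVec G) = 0
    rw [dotProduct_smul, hskew, smul_zero]
  rw [hz] at hint
  simp at hint
  linarith
end
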